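/- arXiv:1510.05246 — 3 statements merged into one kernel-verified Lean document; each statement's English description precedes it below -/
import Mathlib

section
/- Let G be a finite connected 3-regular simple graph on n vertices with n ≥ 8. Then G has a spanning tree with at most ⌊(2n + 4)/9⌋ leaves. -/
/-!
Take a depth-first search tree in which every branch is entered greedily, at a neighbour of its
parent with the fewest neighbours inside the branch. Every edge of `G` joins a vertex to one of
its ancestors, so the numbers of edges going up from the `n` vertices add up to `3n/2`. Each
non-root vertex contributes at least one, and each of the `L` childless vertices contributes three.
The greedy rule provides, for each childless vertex, a vertex of its own (its pivot) that has a
child and at least two edges going up; hence `6L ≤ n + 2`.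

The leaves are the childless vertices and possibly the root. If the root is a leaf and `6L > n`,
counting shows that every vertex with a child and two edges going up is a pivot. The root then has
a neighbour in `G` that is a leaf or a pivot, and an exchange of tree edges at a pivot saves a leaf
or makes the pivot a leaf. Two leaves adjacent in `G` allow an exchange that saves a leaf, so
`⌊n/6⌋ + 1` leaves suffice.
-/

open SimpleGraph

section Exchange

variable {V : Type*} {G T : SimpleGraph V} {a b c u v w : V}

/-- The leaves of a graph: its vertices of degree one. -/
def leafSet (T : SimpleGraph V) : Set V :=
  {v | (T.neighborSet v).ncard = 1}

theorem eq_of_adj_of_adj_of_mem_leafSet (hv : v ∈ leafSet T) (ha : T.Adj v a) (hb : T.Adj v b) :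
    a = b := by
  obtain ⟨x, hx⟩ := Set.ncard_eq_one.1 hv
  have h (y : V) (hy : T.Adj v y) : y = x := by simpa [hx] using (T.mem_neighborSet v y).2 hy
  rw [h a ha, h b hb]

theorem mem_leafSet_congr {T' : SimpleGraph V} (h : ∀ x, T.Adj v x ↔ T'.Adj v x) :
    v ∈ leafSet T ↔ v ∈ leafSet T' := by
  have hN : T.neighborSet v = T'.neighborSet v := Set.ext h
  simp only [leafSet, Set.mem_ofPred_eq, hN]

/-- The result of trading the edge `bc` of `T` for an edge `uw`. -/
def exchangeEdge (T : SimpleGraph V) (b c u w : V) : SimpleGraph V :=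
  T.deleteEdges {s(b, c)} ⊔ edge u w

theorem exchangeEdge_le (hT : T ≤ G) (huw : G.Adj u w) : exchangeEdge T b c u w ≤ G :=
  sup_le ((T.deleteEdges_le _).trans hT) ((edge_le_iff G).2 (.inr huw))

theorem not_reachable_deleteEdges_of_isTree (hT : T.IsTree) (hbc : T.Adj b c)
    (hbu : (T.deleteEdges {s(b, c)}).Reachable b u)
    (hcw : (T.deleteEdges {s(b, c)}).Reachable c w) :
    ¬(T.deleteEdges {s(b, c)}).Reachable u w := fun huw =>
  isBridge_iff.1 (isAcyclic_iff_forall_adj_isBridge.1 hT.isAcyclic hbc)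
    ((hbu.trans huw).trans hcw.symm)

theorem isTree_exchangeEdge (hT : T.IsTree) (hbc : T.Adj b c)
    (hbu : (T.deleteEdges {s(b, c)}).Reachable b u)
    (hcw : (T.deleteEdges {s(b, c)}).Reachable c w) :
    (exchangeEdge T b c u w).IsTree := by
  have huw := not_reachable_deleteEdges_of_isTree hT hbc hbu hcw
  have hne : u ≠ w := by rintro rfl; exact huw .rfl
  have hadj : (exchangeEdge T b c u w).Adj u w :=
    .inr ((edge_adj ..).2 ⟨.inl ⟨rfl, rfl⟩, hne⟩)
  have hle : T.deleteEdges {s(b, c)} ≤ exchangeEdge T b c u w := le_sup_left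
  have hbc' : (exchangeEdge T b c u w).Reachable b c :=
    ((hbu.mono hle).trans hadj.reachable).trans (hcw.mono hle).symm
  have hstep (x y : V) (hxy : T.Adj x y) : (exchangeEdge T b c u w).Reachable x y := by
    by_cases he : s(x, y) = s(b, c)
    · obtain ⟨rfl, rfl⟩ | ⟨rfl, rfl⟩ := Sym2.eq_iff.1 he
      exacts [hbc', hbc'.symm]
    · exact (hle (deleteEdges_adj.2 ⟨hxy, he⟩)).reachable
  have hreach (x y : V) (q : T.Walk x y) : (exchangeEdge T b c u w).Reachable x y := by
    induction q with
    | nil => rfl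
    | cons h _ ih => exact (hstep _ _ h).trans ih
  have := hT.connected.nonempty
  exact ⟨⟨fun x y => (hT.connected x y).elim (hreach x y)⟩,
    (hT.isAcyclic.anti (T.deleteEdges_le _)).sup_edge_of_not_reachable huw⟩

theorem exchangeEdge_adj_iff (hvb : v ≠ b) (hvc : v ≠ c) (hvu : v ≠ u) (hvw : v ≠ w) (x : V) :
    (exchangeEdge T b c u w).Adj v x ↔ T.Adj v x := by
  simp only [exchangeEdge, sup_adj, deleteEdges_adj, edge_adj, Set.mem_singleton_iff, Sym2.eq_iff]
  grind

theorem exchangeEdge_adj_of_adj (hbv : T.Adj b v) (hvc : v ≠ c) :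
    (exchangeEdge T b c u w).Adj b v :=
  .inl (deleteEdges_adj.2 ⟨hbv, by simpa using ⟨hvc, fun _ h => hbv.ne h.symm⟩⟩)

theorem leafSet_exchangeEdge_subset (hT : T.IsTree) (hbc : T.Adj b c)
    (hbu : (T.deleteEdges {s(b, c)}).Reachable b u)
    (hcw : (T.deleteEdges {s(b, c)}).Reachable c w) :
    leafSet (exchangeEdge T b c u w) ⊆ insert b (insert c (leafSet T \ {u, w})) := by
  intro v hv
  by_contra hmem
  simp only [Set.mem_insert_iff, Set.mem_sdiff, Set.mem_singleton_iff, not_or] at hmem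
  obtain ⟨hvb, hvc, hmem⟩ := hmem
  have huw := not_reachable_deleteEdges_of_isTree hT hbc hbu hcw
  have hnew : (exchangeEdge T b c u w).Adj u w :=
    .inr ((edge_adj ..).2 ⟨.inl ⟨rfl, rfl⟩, by rintro rfl; exact huw .rfl⟩)
  have hold {z y : V} (h : (T.deleteEdges {s(b, c)}).Reachable z y) (hy : y ≠ z) :
      ∃ x, (T.deleteEdges {s(b, c)}).Adj y x :=
    h.symm.elim fun q => ⟨q.snd, q.adj_snd (Walk.not_nil_of_ne hy)⟩
  by_cases hvu : v = u
  · subst hvu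
    obtain ⟨x, hx⟩ := hold hbu hvb
    obtain rfl : x = w := eq_of_adj_of_adj_of_mem_leafSet hv (.inl hx) hnew
    exact huw hx.reachable
  by_cases hvw : v = w
  · subst hvw
    obtain ⟨x, hx⟩ := hold hcw hvc
    obtain rfl : x = u := eq_of_adj_of_adj_of_mem_leafSet hv (.inl hx) hnew.symm
    exact huw hx.symm.reachable
  exact hmem ⟨(mem_leafSet_congr (exchangeEdge_adj_iff hvb hvc hvu hvw)).1 hv, by tauto⟩

theorem exists_adj_adj_of_mem_support_of_isPath {q : G.Walk u w} (hq : q.IsPath)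
    (hb : b ∈ q.support) (hbu : b ≠ u) (hbw : b ≠ w) :
    ∃ a ∈ q.support, ∃ c ∈ q.support, a ≠ c ∧ G.Adj b a ∧ G.Adj b c ∧
      (G.deleteEdges {s(b, c)}).Reachable b u ∧ (G.deleteEdges {s(b, c)}).Reachable c w := by
  obtain ⟨q₁, q₂, rfl⟩ := Walk.mem_support_iff_exists_append.1 hb
  cases q₂ with
  | nil => exact absurd rfl hbw
  | @cons _ c _ hbc q₂ =>
    have hnodup := Walk.support_append q₁ (.cons hbc q₂) ▸ hq.support_nodup
    have hc : c ∉ q₁.support := fun h =>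
      List.disjoint_of_nodup_append hnodup h (by simp)
    have hb₂ : b ∉ q₂.support := fun h =>
      List.disjoint_of_nodup_append hnodup q₁.end_mem_support (by simpa using h)
    have ha : q₁.penultimate ∈ q₁.support := q₁.getVert_mem_support _
    refine ⟨q₁.penultimate, by simp [ha], c, by simp, fun h => hc (h ▸ ha),
      (q₁.adj_penultimate (Walk.not_nil_of_ne hbu.symm)).symm, hbc,
      (q₁.toDeleteEdge _ fun h => hc (q₁.snd_mem_support_of_mem_edges h)).reachable.symm,
      (q₂.toDeleteEdge _ fun h => hb₂ (q₂.fst_mem_support_of_mem_edges h)).reachable⟩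

theorem leafSet_subset_pair_of_isPath {q : T.Walk u w} (hq : q.IsPath)
    (hall : ∀ v, v ∈ q.support) : leafSet T ⊆ {u, w} := by
  intro v hv
  by_contra hmem
  simp only [Set.mem_insert_iff, Set.mem_singleton_iff, not_or] at hmem
  obtain ⟨a, -, c, -, hac, ha, hc, -⟩ :=
    exists_adj_adj_of_mem_support_of_isPath hq (hall v) hmem.1 hmem.2
  exact hac (eq_of_adj_of_adj_of_mem_leafSet hv ha hc)

theorem exists_adj_notMem_support (hG : G.Connected) (q : G.Walk u w) (hv : v ∉ q.support) :
    ∃ b ∈ q.support, ∃ z ∉ q.support, G.Adj b z := by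
  obtain ⟨q'⟩ := hG u v
  obtain ⟨d, -, hd, hd'⟩ := q'.exists_boundary_dart {x | x ∈ q.support} q.start_mem_support hv
  exact ⟨d.fst, hd, d.snd, hd', d.adj⟩

/-- At a vertex `b` where `T` leaves its path from `u` to `w`, trade a path edge at `b` for the
edge `uw`. This creates no leaf but possibly the other end of the path edge. -/
theorem exists_isTree_leafSet_ncard_le_of_adj_leaves [Finite V] {k : ℕ} (hk : 2 ≤ k)
    (hTG : T ≤ G) (hT : T.IsTree) (hle : (leafSet T).ncard ≤ k + 1)
    (hu : u ∈ leafSet T) (hw : w ∈ leafSet T) (huw : G.Adj u w) :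
    ∃ T' ≤ G, T'.IsTree ∧ (leafSet T').ncard ≤ k := by
  have hpair : ({u, w} : Set V).ncard = 2 := Set.ncard_pair huw.ne
  obtain ⟨q, hq⟩ := (hT.connected u w).exists_isPath
  by_cases hall : ∀ v, v ∈ q.support
  · exact ⟨T, hTG, hT, ((Set.ncard_le_ncard (leafSet_subset_pair_of_isPath hq hall)).trans
      hpair.le).trans hk⟩
  obtain ⟨v, hv⟩ := not_forall.1 hall
  obtain ⟨b, hb, z, hz, hbz⟩ := exists_adj_notMem_support hT.connected q hv
  have hq_nil : ¬q.Nil := Walk.not_nil_of_ne huw.ne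
  have hbu : b ≠ u := by
    rintro rfl
    exact hz (eq_of_adj_of_adj_of_mem_leafSet hu hbz (q.adj_snd hq_nil) ▸ q.getVert_mem_support _)
  have hbw : b ≠ w := by
    rintro rfl
    exact hz (eq_of_adj_of_adj_of_mem_leafSet hw hbz (q.adj_penultimate hq_nil).symm ▸
      q.getVert_mem_support _)
  obtain ⟨a, ha, c, hc, hac, hba, hbc, hbu', hcw⟩ :=
    exists_adj_adj_of_mem_support_of_isPath hq hb hbu hbw
  have hb_leaf : b ∉ leafSet (exchangeEdge T b c u w) := fun h =>
    hz (eq_of_adj_of_adj_of_mem_leafSet h (exchangeEdge_adj_of_adj hba hac)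
      (exchangeEdge_adj_of_adj hbz fun h => hz (h ▸ hc)) ▸ ha)
  have hsub : leafSet (exchangeEdge T b c u w) ⊆ insert c (leafSet T \ {u, w}) := fun v hv =>
    (leafSet_exchangeEdge_subset hT hbc hbu' hcw hv).resolve_left fun h => hb_leaf (h ▸ hv)
  have hcard := Set.ncard_sdiff_add_ncard_of_subset (Set.pair_subset hu hw)
  refine ⟨_, exchangeEdge_le hTG huw, isTree_exchangeEdge hT hbc hbu' hcw, ?_⟩
  calc _ ≤ (insert c (leafSet T \ {u, w})).ncard := Set.ncard_le_ncard hsub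
    _ ≤ (leafSet T \ {u, w}).ncard + 1 := Set.ncard_insert_le ..
    _ ≤ k := by omega

end Exchange

section Ancestor

variable {V : Type*} {p q : V → V} {a b r x y z : V}

/-- `y` is reached from `x` by iterating the parent map `p` of a rooted tree; every vertex is an
ancestor of itself. The parent of the root is the root. -/
def IsAncestor (p : V → V) (y x : V) : Prop :=
  ∃ k, p^[k] x = y

theorem IsAncestor.refl (p : V → V) (x : V) : IsAncestor p x x :=
  ⟨0, rfl⟩

theorem isAncestor_parent (p : V → V) (x : V) : IsAncestor p (p x) x :=
  ⟨1, rfl⟩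

theorem IsAncestor.trans (hzy : IsAncestor p z y) (hyx : IsAncestor p y x) : IsAncestor p z x := by
  obtain ⟨k, rfl⟩ := hyx
  obtain ⟨j, rfl⟩ := hzy
  exact ⟨j + k, Function.iterate_add_apply ..⟩

theorem isAncestor_iff_eq_or_parent : IsAncestor p y x ↔ y = x ∨ IsAncestor p y (p x) := by
  constructor
  · rintro ⟨_ | k, rfl⟩
    exacts [.inl rfl, .inr ⟨k, rfl⟩]
  · rintro (rfl | h)
    exacts [.refl p y, h.trans (isAncestor_parent p x)]

theorem isAncestor_root_iff (hr : p r = r) : IsAncestor p y r ↔ y = r := by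
  refine ⟨?_, fun h => h ▸ .refl p y⟩
  rintro ⟨k, rfl⟩
  exact Function.iterate_fixed hr k

theorem IsAncestor.total (ha : IsAncestor p a x) (hb : IsAncestor p b x) :
    IsAncestor p a b ∨ IsAncestor p b a := by
  obtain ⟨i, rfl⟩ := ha
  obtain ⟨j, rfl⟩ := hb
  obtain h | h := le_total j i
  · exact .inl ⟨i - j, by rw [← Function.iterate_add_apply, Nat.sub_add_cancel h]⟩
  · exact .inr ⟨j - i, by rw [← Function.iterate_add_apply, Nat.sub_add_cancel h]⟩

theorem IsAncestor.antisymm (hr : p r = r) (hx : IsAncestor p r x) (hxy : IsAncestor p x y)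
    (hyx : IsAncestor p y x) : x = y := by
  obtain ⟨i, rfl⟩ := hyx
  obtain ⟨j, hj⟩ := hxy
  obtain ⟨k, hk⟩ := hx
  rcases i with _ | i
  · rfl
  have hper : Function.IsPeriodicPt p (k * (j + (i + 1))) x :=
    Function.IsPeriodicPt.const_mul (by rwa [← Function.iterate_add_apply] at hj) k
  have hxr : x = r := by
    have hle : k ≤ k * (j + (i + 1)) := Nat.le_mul_of_pos_right _ (by omega)
    rw [← hper.eq, ← Nat.sub_add_cancel hle, Function.iterate_add_apply, hk,
      Function.iterate_fixed hr]
  rw [hxr, Function.iterate_fixed hr]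

theorem not_isAncestor_self_parent (hr : p r = r) (hx : IsAncestor p r x) (hxr : x ≠ r) :
    ¬IsAncestor p x (p x) := by
  intro h
  have hfix : p x = x := (IsAncestor.antisymm hr hx h (isAncestor_parent p x)).symm
  exact hxr ((isAncestor_root_iff hfix).1 hx).symm

theorem IsAncestor.exists_child (h : IsAncestor p b x) (hbx : b ≠ x) :
    ∃ v, p v = b ∧ v ≠ b ∧ IsAncestor p v x := by
  obtain ⟨k, rfl⟩ := h
  induction k with
  | zero => exact absurd rfl hbx
  | succ k ih =>
    rw [Function.iterate_succ_apply'] at hbx ⊢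
    by_cases hfix : p (p^[k] x) = p^[k] x
    · rw [hfix] at hbx ⊢
      exact ih hbx
    · exact ⟨p^[k] x, rfl, Ne.symm hfix, k, rfl⟩

theorem IsAncestor.mem {S : Set V} (hS : Set.MapsTo p S S) (h : IsAncestor p y x) (hx : x ∈ S) :
    y ∈ S := by
  obtain ⟨k, rfl⟩ := h
  exact hS.iterate k hx

theorem IsAncestor.of_eqOn {S : Set V} (h : IsAncestor p y x) (hS : Set.MapsTo p S S)
    (hpq : Set.EqOn p q S) (hx : x ∈ S) : IsAncestor q y x := by
  obtain ⟨k, rfl⟩ := h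
  induction k generalizing x with
  | zero => exact .refl q x
  | succ k ih => exact (ih (hS hx)).trans (hpq hx ▸ isAncestor_parent q x)

end Ancestor

section CutConnected

variable {V : Type*} {G : SimpleGraph V} {C D : Set V} {r : V}

/-- The vertex set `C` induces a connected subgraph of `G`, phrased through cuts. -/
def CutConnected (G : SimpleGraph V) (C : Set V) : Prop :=
  ∀ S ⊂ C, S.Nonempty → ∃ a ∈ S, ∃ b ∈ C \ S, G.Adj a b

theorem cutConnected_univ (hG : G.Connected) : CutConnected G Set.univ := by
  rintro S hS ⟨a, ha⟩
  obtain ⟨b, hb⟩ := (Set.ne_univ_iff_exists_notMem S).1 hS.ne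
  obtain ⟨q⟩ := hG a b
  obtain ⟨d, -, hd, hd'⟩ := q.exists_boundary_dart S ha hb
  exact ⟨d.fst, hd, d.snd, ⟨Set.mem_univ _, hd'⟩, d.adj⟩

theorem CutConnected.sdiff (hC : CutConnected G C) (hr : r ∈ C) (hD : D ⊂ C)
    (hclosed : ∀ x ∈ C \ D, ∀ y ∈ D, G.Adj x y → x = r) : CutConnected G (C \ D) := by
  intro S hS hSne
  by_cases hrS : r ∈ S
  · obtain ⟨z, hz, hzS⟩ := Set.exists_of_ssubset hS
    have hss : S ∪ D ⊂ C :=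
      ⟨Set.union_subset (hS.subset.trans Set.sdiff_subset) hD.subset,
        fun h => (h hz.1).elim hzS hz.2⟩
    obtain ⟨a, ha | ha, b, ⟨hb, hbSD⟩, hab⟩ := hC _ hss (hSne.mono Set.subset_union_left)
    · exact ⟨a, ha, b, ⟨⟨hb, fun h => hbSD (.inr h)⟩, fun h => hbSD (.inl h)⟩, hab⟩
    · obtain rfl := hclosed b ⟨hb, fun h => hbSD (.inr h)⟩ a ha hab.symm
      exact absurd (.inl hrS) hbSD
  · obtain ⟨a, ha, b, ⟨hb, hbS⟩, hab⟩ := hC S (hS.trans_subset Set.sdiff_subset) hSne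
    have hbD : b ∉ D := fun h => hrS (hclosed a (hS.subset ha) b h hab ▸ ha)
    exact ⟨a, ha, b, ⟨⟨hb, hbD⟩, hbS⟩, hab⟩

theorem CutConnected.exists_branch [Finite V] (hC : CutConnected G C) (hr : r ∈ C)
    (hCr : C ≠ {r}) :
    ∃ D ⊆ C \ {r}, CutConnected G D ∧ CutConnected G (C \ D) ∧
      (∃ b ∈ D, G.Adj r b) ∧ ∀ x ∈ C \ D, ∀ y ∈ D, G.Adj x y → x = r := by
  have hne : (C \ {r}).Nonempty := by
    rw [Set.sdiff_nonempty]
    exact fun h => hCr (h.antisymm (Set.singleton_subset_iff.2 hr))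
  obtain ⟨D, hDmin⟩ := (Set.toFinite {D : Set V | D ⊆ C \ {r} ∧ D.Nonempty ∧
    ∀ x ∈ C \ D, ∀ y ∈ D, G.Adj x y → x = r}).exists_minimal ⟨C \ {r}, subset_rfl, hne, by
      simp +contextual [hr]⟩
  obtain ⟨hDC, hD, hclosed⟩ := hDmin.prop
  have hDss : D ⊂ C := ⟨hDC.trans Set.sdiff_subset, fun h => (hDC (h hr)).2 rfl⟩
  refine ⟨D, hDC, ?_, hC.sdiff hr hDss hclosed, ?_, hclosed⟩
  · intro S hS hSne
    by_contra! hcut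
    refine hS.not_subset (hDmin.le_of_le ⟨hS.subset.trans hDC, hSne, ?_⟩ hS.subset)
    intro x hx y hy hxy
    by_cases hxD : x ∈ D
    · exact absurd hxy.symm (hcut y hy x ⟨hxD, hx.2⟩)
    · exact hclosed x ⟨hx.1, hxD⟩ y (hS.subset hy) hxy
  · obtain ⟨a, ha, b, hb, hab⟩ := hC D hDss hD
    obtain rfl := hclosed b hb a ha hab.symm
    exact ⟨a, ha, hab.symm⟩

end CutConnected

section GreedyDFS

variable {V : Type*} {G : SimpleGraph V} {C D : Set V} {p p' : V → V} {r r' x y : V}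

/-- The descendants of `x` in `C`, including `x` itself. -/
def subtree (p : V → V) (C : Set V) (x : V) : Set V :=
  {y ∈ C | IsAncestor p x y}

/-- `p` is the parent map of a depth-first search tree of `G` on the vertex set `C` with root `r`,
in which every branch is entered greedily: among the neighbours of `p x` in the subtree of `x`,
the vertex `x` has the fewest neighbours in that subtree. -/
structure IsGreedyDFS (G : SimpleGraph V) (C : Set V) (r : V) (p : V → V) : Prop where
  root_mem : r ∈ C
  parent_root : p r = r
  mapsTo : Set.MapsTo p C C
  adj_parent : ∀ x ∈ C, x ≠ r → G.Adj x (p x)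
  root_isAncestor : ∀ x ∈ C, IsAncestor p r x
  comparable : ∀ x ∈ C, ∀ y ∈ C, G.Adj x y → IsAncestor p x y ∨ IsAncestor p y x
  greedy : ∀ x ∈ C, x ≠ r → ∀ y ∈ subtree p C x, G.Adj (p x) y →
    (G.neighborSet x ∩ subtree p C x).ncard ≤ (G.neighborSet y ∩ subtree p C x).ncard

open Classical in
/-- The parent map of the tree obtained from the tree of `p` by hanging the tree of `p'` on the
vertices `D`, with root `r'`, below the vertex `r`. -/
noncomputable def graft (p p' : V → V) (D : Set V) (r r' : V) : V → V :=
  fun x => if x = r' then r else if x ∈ D then p' x else p x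

@[simp]
theorem graft_apply_root : graft p p' D r r' r' = r :=
  if_pos rfl

theorem graft_apply_of_mem (hx : x ∈ D) (hxr : x ≠ r') : graft p p' D r r' x = p' x := by
  rw [graft, if_neg hxr, if_pos hx]

theorem graft_apply_of_notMem (hr' : r' ∈ D) (hx : x ∉ D) : graft p p' D r r' x = p x := by
  rw [graft, if_neg (by rintro rfl; exact hx hr'), if_neg hx]

theorem eqOn_graft (hCD : Disjoint C D) (hr' : r' ∈ D) : Set.EqOn p (graft p p' D r r') C :=
  fun _ hx => (graft_apply_of_notMem hr' (hCD.notMem_of_mem_left hx)).symm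

theorem mapsTo_graft (hCD : Disjoint C D) (hp : Set.MapsTo p C C) (hr' : r' ∈ D) :
    Set.MapsTo (graft p p' D r r') C C :=
  hp.congr (eqOn_graft hCD hr')

theorem isAncestor_graft_iff (hCD : Disjoint C D) (hp : Set.MapsTo p C C) (hr' : r' ∈ D)
    (hx : x ∈ C) : IsAncestor (graft p p' D r r') y x ↔ IsAncestor p y x :=
  ⟨fun h => h.of_eqOn (mapsTo_graft hCD hp hr') (eqOn_graft hCD hr').symm hx,
    fun h => h.of_eqOn hp (eqOn_graft hCD hr') hx⟩

theorem isAncestor_graft_branch_iff (hCD : Disjoint C D) (hp : IsGreedyDFS G C r p)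
    (hp' : IsGreedyDFS G D r' p') (hx : x ∈ D) (hy : y ∈ D) :
    IsAncestor (graft p p' D r r') y x ↔ IsAncestor p' y x := by
  constructor
  · rintro ⟨k, rfl⟩
    induction k generalizing x with
    | zero => exact .refl p' x
    | succ k ih =>
      rw [Function.iterate_succ_apply] at hy ⊢
      by_cases hxr : x = r'
      · rw [hxr, graft_apply_root] at hy
        exact absurd ((mapsTo_graft hCD hp.mapsTo hp'.root_mem).iterate k hp.root_mem)
          (hCD.notMem_of_mem_right hy)
      · rw [graft_apply_of_mem hx hxr] at hy ⊢
        exact (ih (hp'.mapsTo hx) hy).trans (isAncestor_parent p' x)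
  · rintro ⟨k, rfl⟩
    induction k generalizing x with
    | zero => exact .refl _ x
    | succ k ih =>
      rw [Function.iterate_succ_apply] at hy ⊢
      by_cases hxr : x = r'
      · rw [hxr, hp'.parent_root, Function.iterate_fixed hp'.parent_root]
        exact .refl _ r'
      · refine (ih (hp'.mapsTo hx) hy).trans ?_
        rw [← graft_apply_of_mem (p := p) (p' := p') (r := r) hx hxr]
        exact isAncestor_parent _ x

theorem root_isAncestor_graft (hCD : Disjoint C D) (hp : IsGreedyDFS G C r p)
    (hp' : IsGreedyDFS G D r' p') (hx : x ∈ C ∪ D) : IsAncestor (graft p p' D r r') r x := by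
  rcases hx with hx | hx
  · exact (isAncestor_graft_iff hCD hp.mapsTo hp'.root_mem hx).2 (hp.root_isAncestor x hx)
  · have hr : IsAncestor (graft p p' D r r') r r' := ⟨1, graft_apply_root⟩
    exact hr.trans ((isAncestor_graft_branch_iff hCD hp hp' hx hp'.root_mem).2
      (hp'.root_isAncestor x hx))

theorem eq_root_of_isAncestor_graft (hCD : Disjoint C D) (hp : IsGreedyDFS G C r p)
    (hp' : IsGreedyDFS G D r' p') (hx : x ∈ C) (hy : y ∈ D)
    (h : IsAncestor (graft p p' D r r') x y) : x = r := by
  obtain ⟨k, rfl⟩ := h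
  induction k generalizing y with
  | zero => exact absurd hx (hCD.notMem_of_mem_right hy)
  | succ k ih =>
    rw [Function.iterate_succ_apply] at hx ⊢
    by_cases hyr : y = r'
    · have hr : graft p p' D r r' r = r :=
        (eqOn_graft hCD hp'.root_mem hp.root_mem).symm.trans hp.parent_root
      rw [hyr, graft_apply_root, Function.iterate_fixed hr]
    · rw [graft_apply_of_mem hy hyr] at hx ⊢
      exact ih (hp'.mapsTo hy) hx

theorem subtree_graft_of_mem (hCD : Disjoint C D) (hp : IsGreedyDFS G C r p)
    (hp' : IsGreedyDFS G D r' p') (hx : x ∈ C) (hxr : x ≠ r) :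
    subtree (graft p p' D r r') (C ∪ D) x = subtree p C x := by
  ext y
  constructor
  · rintro ⟨hy | hy, hxy⟩
    · exact ⟨hy, (isAncestor_graft_iff hCD hp.mapsTo hp'.root_mem hy).1 hxy⟩
    · exact absurd (eq_root_of_isAncestor_graft hCD hp hp' hx hy hxy) hxr
  · rintro ⟨hy, hxy⟩
    exact ⟨.inl hy, (isAncestor_graft_iff hCD hp.mapsTo hp'.root_mem hy).2 hxy⟩

theorem subtree_graft_of_mem_branch (hCD : Disjoint C D) (hp : IsGreedyDFS G C r p)
    (hp' : IsGreedyDFS G D r' p') (hx : x ∈ D) :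
    subtree (graft p p' D r r') (C ∪ D) x = subtree p' D x := by
  ext y
  constructor
  · rintro ⟨hy | hy, hxy⟩
    · exact absurd (hxy.mem (mapsTo_graft hCD hp.mapsTo hp'.root_mem) hy)
        (hCD.notMem_of_mem_right hx)
    · exact ⟨hy, (isAncestor_graft_branch_iff hCD hp hp' hy hx).1 hxy⟩
  · rintro ⟨hy, hxy⟩
    exact ⟨.inr hy, (isAncestor_graft_branch_iff hCD hp hp' hy hx).2 hxy⟩

theorem comparable_graft (hCD : Disjoint C D) (hp : IsGreedyDFS G C r p)
    (hp' : IsGreedyDFS G D r' p') (hclosed : ∀ x ∈ C, ∀ y ∈ D, G.Adj x y → x = r)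
    (hx : x ∈ C ∪ D) (hy : y ∈ C ∪ D) (hxy : G.Adj x y) :
    IsAncestor (graft p p' D r r') x y ∨ IsAncestor (graft p p' D r r') y x := by
  rcases hx with hx | hx <;> rcases hy with hy | hy
  · simp only [isAncestor_graft_iff hCD hp.mapsTo hp'.root_mem, hx, hy]
    exact hp.comparable x hx y hy hxy
  · rw [hclosed x hx y hy hxy]
    exact .inl (root_isAncestor_graft hCD hp hp' (.inr hy))
  · rw [hclosed y hy x hx hxy.symm]
    exact .inr (root_isAncestor_graft hCD hp hp' (.inr hx))
  · simp only [isAncestor_graft_branch_iff hCD hp hp', hx, hy]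
    exact hp'.comparable x hx y hy hxy

theorem IsGreedyDFS.graft (hp : IsGreedyDFS G C r p) (hp' : IsGreedyDFS G D r' p')
    (hCD : Disjoint C D) (hrr' : G.Adj r r') (hclosed : ∀ x ∈ C, ∀ y ∈ D, G.Adj x y → x = r)
    (hgreedy : ∀ y ∈ D, G.Adj r y → (G.neighborSet r' ∩ D).ncard ≤ (G.neighborSet y ∩ D).ncard) :
    IsGreedyDFS G (C ∪ D) r (graft p p' D r r') where
  root_mem := .inl hp.root_mem
  parent_root := (eqOn_graft hCD hp'.root_mem hp.root_mem).symm.trans hp.parent_root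
  mapsTo := by
    rintro x (hx | hx)
    · exact .inl (mapsTo_graft hCD hp.mapsTo hp'.root_mem hx)
    · by_cases hxr : x = r'
      · exact .inl (by simpa [hxr] using hp.root_mem)
      · exact .inr (graft_apply_of_mem hx hxr ▸ hp'.mapsTo hx)
  adj_parent := by
    rintro x (hx | hx) hxr
    · rw [graft_apply_of_notMem hp'.root_mem (hCD.notMem_of_mem_left hx)]
      exact hp.adj_parent x hx hxr
    · by_cases hxr' : x = r'
      · simpa [hxr'] using hrr'.symm
      · exact graft_apply_of_mem hx hxr' ▸ hp'.adj_parent x hx hxr'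
  root_isAncestor _ hx := root_isAncestor_graft hCD hp hp' hx
  comparable _ hx _ hy hxy := comparable_graft hCD hp hp' hclosed hx hy hxy
  greedy := by
    rintro x (hx | hx) hxr y
    · rw [subtree_graft_of_mem hCD hp hp' hx hxr, graft_apply_of_notMem hp'.root_mem
        (hCD.notMem_of_mem_left hx)]
      exact hp.greedy x hx hxr y
    · rw [subtree_graft_of_mem_branch hCD hp hp' hx]
      by_cases hxr' : x = r'
      · have hsub : subtree p' D r' = D :=
          Set.sep_eq_self_iff_mem_true.2 hp'.root_isAncestor
        rw [hxr', hsub, graft_apply_root]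
        exact hgreedy y
      · rw [graft_apply_of_mem hx hxr']
        exact hp'.greedy x hx hxr' y

theorem CutConnected.exists_isGreedyDFS [Finite V] (hC : CutConnected G C) (hr : r ∈ C) :
    ∃ p, IsGreedyDFS G C r p := by
  induction C using WellFoundedLT.induction generalizing r with
  | ind C ih =>
    by_cases hCr : C = {r}
    · subst hCr
      exact ⟨id, hr, rfl, Set.mapsTo_id _, by simp, by simpa using .refl id r, by simp,
        by simp⟩
    obtain ⟨D, hDC, hD, hCD, ⟨b, hb, hrb⟩, hclosed⟩ := hC.exists_branch hr hCr
    obtain ⟨r', ⟨hr'D, hrr'⟩, hmin⟩ := Set.exists_min_image (D ∩ G.neighborSet r)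
      (fun y => (G.neighborSet y ∩ D).ncard) (Set.toFinite _) ⟨b, hb, hrb⟩
    have hrD : r ∉ D := fun h => (hDC h).2 rfl
    have hDC' : D ⊆ C := hDC.trans Set.sdiff_subset
    obtain ⟨p, hp⟩ := ih (C \ D) ⟨Set.sdiff_subset, fun h => (h (hDC' hb)).2 hb⟩ hCD ⟨hr, hrD⟩
    obtain ⟨p', hp'⟩ := ih D ⟨hDC', fun h => hrD (h hr)⟩ hD hr'D
    have hgraft := hp.graft hp' Set.disjoint_sdiff_left hrr' hclosed
      fun y hy hry => hmin y ⟨hy, hry⟩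
    rw [Set.sdiff_union_of_subset hDC'] at hgraft
    exact ⟨_, hgraft⟩

end GreedyDFS

section ParentGraph

variable {V : Type*} {H : SimpleGraph V} {p : V → V} {r x y : V}

/-- The tree on `V` in which every vertex is joined to its parent; the loop at the root is
discarded. -/
def parentGraph (p : V → V) : SimpleGraph V :=
  fromRel fun x y => p x = y

theorem parentGraph_adj_iff : (parentGraph p).Adj x y ↔ x ≠ y ∧ (p x = y ∨ p y = x) :=
  Iff.rfl

theorem parentGraph_adj_parent (hx : x ≠ p x) : (parentGraph p).Adj x (p x) :=
  ⟨hx, .inl rfl⟩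

theorem reachable_of_isAncestor
    (hH : ∀ z, IsAncestor p x z → z ≠ x → z ≠ p z → H.Adj z (p z)) (h : IsAncestor p x y) :
    H.Reachable y x := by
  obtain ⟨k, hk⟩ := h
  induction k generalizing y with
  | zero => exact hk ▸ .rfl
  | succ k ih =>
    have hpy : H.Reachable (p y) x := ih hk
    by_cases hyx : y = x
    · exact hyx ▸ .rfl
    by_cases hfix : y = p y
    · rwa [← hfix] at hpy
    · exact (hH y ⟨k + 1, hk⟩ hyx hfix).reachable.trans hpy

theorem reachable_deleteEdges_parentGraph (hx : ¬IsAncestor p x (p x)) (h : IsAncestor p x y) :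
    ((parentGraph p).deleteEdges {s(p x, x)}).Reachable x y := by
  refine (reachable_of_isAncestor (fun z hz hzx hfix => ?_) h).symm
  refine deleteEdges_adj.2 ⟨parentGraph_adj_parent hfix, ?_⟩
  rw [Set.mem_singleton_iff, Sym2.eq_iff]
  rintro (⟨rfl, -⟩ | ⟨rfl, -⟩)
  exacts [hx hz, hzx rfl]

theorem isBridge_parentGraph (hx : ¬IsAncestor p x (p x)) :
    (parentGraph p).IsBridge s(x, p x) := by
  rw [isBridge_iff]
  rintro ⟨q⟩
  obtain ⟨⟨⟨a, b⟩, hab⟩, -, ha, hb⟩ :=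
    q.exists_boundary_dart {y | IsAncestor p x y} (.refl p x) hx
  change ((parentGraph p).deleteEdges _).Adj a b at hab
  obtain ⟨⟨-, rfl | rfl⟩, hne⟩ := deleteEdges_adj.1 hab
  · obtain rfl | ha := isAncestor_iff_eq_or_parent.1 ha
    exacts [hne rfl, hb ha]
  · exact hb (IsAncestor.trans ha (isAncestor_parent p b))

theorem isTree_parentGraph (hr : p r = r) (hroot : ∀ x, IsAncestor p r x) :
    (parentGraph p).IsTree := by
  have hreach (x : V) : (parentGraph p).Reachable x r :=
    reachable_of_isAncestor (fun _ _ _ => parentGraph_adj_parent) (hroot x)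
  have : Nonempty V := ⟨r⟩
  refine ⟨⟨fun x y => (hreach x).trans (hreach y).symm⟩,
    isAcyclic_iff_forall_adj_isBridge.2 ?_⟩
  have hbridge {x : V} (hx : x ≠ p x) : (parentGraph p).IsBridge s(x, p x) :=
    isBridge_parentGraph (not_isAncestor_self_parent hr (hroot x) fun h => hx (h ▸ hr.symm))
  rintro x y ⟨hxy, rfl | rfl⟩
  · exact hbridge hxy
  · exact Sym2.eq_swap ▸ hbridge hxy.symm

theorem mem_leafSet_parentGraph (hx : x ∉ Set.range p) : x ∈ leafSet (parentGraph p) := by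
  refine Set.ncard_eq_one.2 ⟨p x, Set.ext fun y => ?_⟩
  rw [mem_neighborSet, parentGraph_adj_iff, Set.mem_singleton_iff]
  constructor
  · rintro ⟨-, h | h⟩
    exacts [h.symm, (hx ⟨y, h⟩).elim]
  · rintro rfl
    exact ⟨fun h => hx ⟨x, h.symm⟩, .inl rfl⟩

theorem leafSet_parentGraph_subset (hr : p r = r) (hroot : ∀ x, IsAncestor p r x) :
    leafSet (parentGraph p) ⊆ insert r (Set.range p)ᶜ := by
  intro v hv
  by_contra! hmem
  simp only [Set.mem_insert_iff, Set.mem_compl_iff, not_or, not_not] at hmem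
  obtain ⟨hvr, z, rfl⟩ := hmem
  have hnot := not_isAncestor_self_parent hr (hroot _) hvr
  have hne : p z ≠ p (p z) := fun h => hnot (h ▸ .refl p _)
  have hzne : p z ≠ z := fun h => hne (congrArg p h).symm
  have hz := eq_of_adj_of_adj_of_mem_leafSet hv (parentGraph_adj_parent hne) ⟨hzne, .inr rfl⟩
  rw [hz] at hnot
  exact hnot (isAncestor_parent p z)

end ParentGraph

section Cubic

variable {V : Type*} {G : SimpleGraph V} {p : V → V} {r v l l' x : V}

theorem IsGreedyDFS.isAncestor_root (hp : IsGreedyDFS G .univ r p) (x : V) : IsAncestor p r x :=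
  hp.root_isAncestor x trivial

theorem IsGreedyDFS.not_isAncestor_parent (hp : IsGreedyDFS G .univ r p) (hx : x ≠ r) :
    ¬IsAncestor p x (p x) :=
  not_isAncestor_self_parent hp.parent_root (hp.isAncestor_root x) hx

theorem IsGreedyDFS.ne_parent (hp : IsGreedyDFS G .univ r p) (hx : x ≠ r) : x ≠ p x :=
  (hp.adj_parent x trivial hx).ne

theorem IsGreedyDFS.isTree (hp : IsGreedyDFS G .univ r p) : (parentGraph p).IsTree :=
  isTree_parentGraph hp.parent_root hp.isAncestor_root

theorem IsGreedyDFS.leafSet_subset (hp : IsGreedyDFS G .univ r p) :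
    leafSet (parentGraph p) ⊆ insert r (Set.range p)ᶜ :=
  leafSet_parentGraph_subset hp.parent_root hp.isAncestor_root

theorem IsGreedyDFS.parentGraph_le (hp : IsGreedyDFS G .univ r p) : parentGraph p ≤ G := by
  have hadj {x : V} (hx : x ≠ p x) : G.Adj x (p x) :=
    hp.adj_parent x trivial fun h => hx (h ▸ hp.parent_root.symm)
  rintro x y ⟨hxy, rfl | rfl⟩
  exacts [hadj hxy, (hadj hxy.symm).symm]

/-- The number of neighbours of `x` among its ancestors. -/
noncomputable def upDegree (G : SimpleGraph V) (p : V → V) (x : V) : ℕ :=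
  (G.neighborSet x ∩ {z | IsAncestor p z x}).ncard

/-- The number of neighbours of `x` among its descendants. -/
noncomputable def downDegree (G : SimpleGraph V) (p : V → V) (x : V) : ℕ :=
  (G.neighborSet x ∩ subtree p .univ x).ncard

theorem IsGreedyDFS.upDegree_add_downDegree [Finite V] (hp : IsGreedyDFS G .univ r p) (x : V) :
    upDegree G p x + downDegree G p x = (G.neighborSet x).ncard := by
  rw [upDegree, downDegree, ← Set.ncard_union_eq]
  · rw [← Set.inter_union_distrib_left, Set.inter_eq_left.2]
    intro y hy
    exact (hp.comparable x trivial y trivial hy).symm.imp id fun h => ⟨trivial, h⟩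
  · rw [Set.disjoint_left]
    rintro y ⟨hxy, hyx⟩ ⟨-, -, hxy'⟩
    exact hxy.ne (IsAncestor.antisymm hp.parent_root (hp.isAncestor_root x) hxy' hyx)

theorem sum_ncard_setOf_comm {α β : Type*} [Fintype α] [Fintype β] (R : α → β → Prop) :
    ∑ x, {y | R x y}.ncard = ∑ y, {x | R x y}.ncard := by
  classical
  simpa [Finset.bipartiteAbove, Finset.bipartiteBelow, ← Set.ncard_coe_finset] using
    Finset.sum_card_bipartiteAbove_eq_sum_card_bipartiteBelow R (s := .univ) (t := .univ)

theorem sum_downDegree_eq_sum_upDegree [Fintype V] (G : SimpleGraph V) (p : V → V) :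
    ∑ x, downDegree G p x = ∑ x, upDegree G p x := by
  simpa [upDegree, downDegree, subtree, Set.inter_def, G.adj_comm] using
    sum_ncard_setOf_comm fun x y => G.Adj x y ∧ IsAncestor p x y

theorem IsGreedyDFS.two_mul_sum_upDegree [Fintype V] (hp : IsGreedyDFS G .univ r p) :
    2 * ∑ x, upDegree G p x = ∑ x, (G.neighborSet x).ncard := by
  simp only [← hp.upDegree_add_downDegree, Finset.sum_add_distrib,
    sum_downDegree_eq_sum_upDegree, two_mul]

theorem subtree_eq_singleton (hx : x ∉ Set.range p) : subtree p .univ x = {x} := by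
  refine Set.eq_singleton_iff_unique_mem.2 ⟨⟨trivial, .refl p x⟩, ?_⟩
  rintro y ⟨-, _ | k, hk⟩
  · exact hk
  · rw [Function.iterate_succ_apply'] at hk
    exact (hx ⟨_, hk⟩).elim

theorem IsGreedyDFS.upDegree_eq_of_notMem_range [Finite V] (hp : IsGreedyDFS G .univ r p)
    (hx : x ∉ Set.range p) : upDegree G p x = (G.neighborSet x).ncard := by
  have hdown : downDegree G p x = 0 := by
    rw [downDegree, subtree_eq_singleton hx, Set.inter_singleton_eq_empty.2 (by simp),
      Set.ncard_empty]
  rw [← hp.upDegree_add_downDegree, hdown, add_zero]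

theorem IsGreedyDFS.one_le_upDegree [Finite V] (hp : IsGreedyDFS G .univ r p) (hx : x ≠ r) :
    1 ≤ upDegree G p x :=
  Nat.one_le_iff_ne_zero.2 (Set.ncard_ne_zero_of_mem
    ⟨hp.adj_parent x trivial hx, isAncestor_parent p x⟩)

/-- The vertices that qualify as pivots: they have a child and at least two neighbours among their
ancestors. -/
def pivotCandidates (G : SimpleGraph V) (p : V → V) : Set V :=
  {x ∈ Set.range p | 2 ≤ upDegree G p x}

theorem IsGreedyDFS.four_mul_ncard_compl_range_add_le [Fintype V]
    (hp : IsGreedyDFS G .univ r p) (hcubic : ∀ x, (G.neighborSet x).ncard = 3) :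
    4 * (Set.range p)ᶜ.ncard + 2 * (pivotCandidates G p).ncard ≤ Fintype.card V + 2 := by
  classical
  have hsum (S : Set V) [DecidablePred (· ∈ S)] : ∑ x, (if x ∈ S then 1 else 0) = S.ncard := by
    simp [Set.ncard_eq_toFinset_card']
  have hpoint (x : V) : 1 + 2 * (if x ∈ (Set.range p)ᶜ then 1 else 0) +
      (if x ∈ pivotCandidates G p then 1 else 0) ≤
        upDegree G p x + if x ∈ ({r} : Set V) then 1 else 0 := by
    have hterm : x ∉ Set.range p → upDegree G p x = 3 := fun h =>
      (hp.upDegree_eq_of_notMem_range h).trans (hcubic x)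
    have hcand : x ∈ pivotCandidates G p → x ∈ Set.range p ∧ 2 ≤ upDegree G p x := id
    have hx := hp.one_le_upDegree (x := x)
    grind
  have htotal := Finset.sum_le_sum fun x (_ : x ∈ Finset.univ) => hpoint x
  have hup := hp.two_mul_sum_upDegree
  simp only [Finset.sum_add_distrib, ← Finset.mul_sum, hsum, hcubic, Set.ncard_singleton,
    Finset.sum_const, Finset.card_univ, smul_eq_mul] at htotal hup
  omega

/-- The pivot `v` of a childless vertex `l` is the child, towards `l`, of a neighbour of `l` other
than the parent of `l`. Swapping the tree edge from `v` to its parent for the edge from `l` to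
that parent removes the leaf `l`. -/
structure IsPivot (G : SimpleGraph V) (p : V → V) (r v l : V) : Prop where
  notMem_range : l ∉ Set.range p
  isAncestor : IsAncestor p v l
  ne : v ≠ l
  adj : G.Adj (p v) l
  parent_ne_root : p v ≠ r

theorem IsPivot.ne_root (hp : IsGreedyDFS G .univ r p) (hv : IsPivot G p r v l) : v ≠ r :=
  fun h => hv.parent_ne_root (h ▸ hp.parent_root)

theorem IsPivot.mem_range (hv : IsPivot G p r v l) : v ∈ Set.range p :=
  have ⟨z, hz, _⟩ := hv.isAncestor.exists_child hv.ne
  ⟨z, hz⟩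

theorem IsGreedyDFS.exists_neighborSet_eq_of_notMem_range (hp : IsGreedyDFS G .univ r p)
    (hcubic : ∀ x, (G.neighborSet x).ncard = 3) (hl : l ∉ Set.range p) :
    ∃ a b, a ≠ b ∧ IsAncestor p a b ∧ IsAncestor p b l ∧ G.neighborSet l = {p l, a, b} ∧
      b ≠ p l := by
  have hlr : l ≠ r := fun h => hl ⟨l, by rw [h, hp.parent_root]⟩
  have hpl : p l ∈ G.neighborSet l := hp.adj_parent l trivial hlr
  have hcard : (G.neighborSet l \ {p l}).ncard = 2 := by
    rw [Set.ncard_sdiff_singleton_of_mem hpl, hcubic]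
  obtain ⟨a, b, hab, hN⟩ := Set.ncard_eq_two.1 hcard
  have hN' : G.neighborSet l = {p l, a, b} := by
    rw [← hN, Set.insert_sdiff_singleton, Set.insert_eq_of_mem hpl]
  have hanc {y : V} (hy : y ∈ ({a, b} : Set V)) : IsAncestor p y l ∧ y ≠ p l := by
    obtain ⟨hadj, hne⟩ := hN ▸ hy
    refine ⟨(hp.comparable l trivial y trivial hadj).resolve_left fun h => ?_, hne⟩
    have hyl : y ∈ subtree p .univ l := ⟨trivial, h⟩
    rw [subtree_eq_singleton hl] at hyl
    exact G.ne_of_adj hadj hyl.symm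
  obtain ⟨ha, hapl⟩ := hanc (.inl rfl)
  obtain ⟨hb, hbpl⟩ := hanc (.inr rfl)
  obtain h | h := ha.total hb
  · exact ⟨a, b, hab, h, hb, hN', hbpl⟩
  · exact ⟨b, a, hab.symm, h, ha, by rw [hN', Set.pair_comm], hapl⟩

/-- Were the chosen child `v` of `b` to have two descending edges, the greedy choice would have
preferred `l`, whose only neighbour below `b` is its parent. -/
theorem IsGreedyDFS.exists_isPivot [Finite V] (hp : IsGreedyDFS G .univ r p)
    (hcubic : ∀ x, (G.neighborSet x).ncard = 3) (hl : l ∉ Set.range p) :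
    ∃ v, IsPivot G p r v l ∧ 2 ≤ upDegree G p v := by
  obtain ⟨a, b, hab, hanc_ab, hanc_bl, hN, hbpl⟩ :=
    hp.exists_neighborSet_eq_of_notMem_range hcubic hl
  have hlb : G.Adj l b := by simp [← mem_neighborSet, hN]
  obtain ⟨v, rfl, hvb, hvl⟩ := hanc_bl.exists_child hlb.ne.symm
  have hpvr : p v ≠ r := by
    intro h
    rw [h] at hanc_ab hab
    exact hab ((isAncestor_root_iff hp.parent_root).1 hanc_ab)
  have hpivot : IsPivot G p r v l :=
    ⟨hl, hvl, by rintro rfl; exact hbpl rfl, hlb.symm, hpvr⟩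
  refine ⟨v, hpivot, ?_⟩
  have hvr := hpivot.ne_root hp
  have hv_not := hp.not_isAncestor_parent hvr
  have hle : downDegree G p v ≤ 1 := calc
    _ ≤ (G.neighborSet l ∩ subtree p .univ v).ncard :=
      hp.greedy v trivial hvr l ⟨trivial, hvl⟩ hlb.symm
    _ ≤ ({p l} : Set V).ncard := by
      refine Set.ncard_le_ncard ?_
      rw [hN]
      rintro y ⟨rfl | rfl | rfl, -, hy⟩
      exacts [rfl, (hv_not (hy.trans hanc_ab)).elim, (hv_not hy).elim]
    _ = 1 := Set.ncard_singleton _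
  have := hp.upDegree_add_downDegree v
  rw [hcubic] at this
  omega

theorem IsPivot.unique [Finite V] (hp : IsGreedyDFS G .univ r p)
    (hcubic : ∀ x, (G.neighborSet x).ncard = 3) (hl : IsPivot G p r v l)
    (hl' : IsPivot G p r v l') : l = l' := by
  by_contra hll'
  have hanc := hp.not_isAncestor_parent (hl.ne_root hp)
  have hv_ne : v ≠ p (p v) := fun h => hanc ⟨1, h.symm⟩
  have hne {m : V} (hm : IsPivot G p r v m) : p (p v) ≠ m := fun h => hm.notMem_range ⟨_, h⟩
  have hcard : ({v, p (p v), l, l'} : Set V).ncard = 4 := by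
    rw [Set.ncard_insert_of_notMem, Set.ncard_insert_of_notMem, Set.ncard_pair hll'] <;>
      simp [hv_ne, hl.ne, hl'.ne, hne hl, hne hl']
  have hsub : {v, p (p v), l, l'} ⊆ G.neighborSet (p v) := by
    rintro y (rfl | rfl | rfl | rfl)
    exacts [(hp.adj_parent _ trivial (hl.ne_root hp)).symm,
      hp.adj_parent _ trivial hl.parent_ne_root, hl.adj, hl'.adj]
  have := Set.ncard_le_ncard hsub
  rw [hcubic] at this
  omega

theorem IsGreedyDFS.ncard_compl_range_le [Finite V] (hp : IsGreedyDFS G .univ r p)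
    (hcubic : ∀ x, (G.neighborSet x).ncard = 3) {P : Set V}
    (hP : ∀ l ∉ Set.range p, ∃ v ∈ P, IsPivot G p r v l) : (Set.range p)ᶜ.ncard ≤ P.ncard := by
  choose! f hfP hf using hP
  exact Set.ncard_le_ncard_of_injOn f hfP fun l hl l' hl' h =>
    (hf l hl).unique hp hcubic (h ▸ hf l' hl')

theorem IsGreedyDFS.exists_mem_pivotCandidates [Finite V] (hp : IsGreedyDFS G .univ r p)
    (hcubic : ∀ x, (G.neighborSet x).ncard = 3) (hl : l ∉ Set.range p) :
    ∃ v ∈ pivotCandidates G p, IsPivot G p r v l :=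
  have ⟨v, hv, hup⟩ := hp.exists_isPivot hcubic hl
  ⟨v, ⟨hv.mem_range, hup⟩, hv⟩

theorem IsGreedyDFS.six_mul_ncard_compl_range_le [Fintype V] (hp : IsGreedyDFS G .univ r p)
    (hcubic : ∀ x, (G.neighborSet x).ncard = 3) :
    6 * (Set.range p)ᶜ.ncard ≤ Fintype.card V + 2 := by
  have hcount := hp.four_mul_ncard_compl_range_add_le hcubic
  have := hp.ncard_compl_range_le hcubic fun l hl => hp.exists_mem_pivotCandidates hcubic hl
  omega

theorem IsGreedyDFS.exists_isPivot_of_mem_pivotCandidates [Fintype V]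
    (hp : IsGreedyDFS G .univ r p)
    (hcubic : ∀ x, (G.neighborSet x).ncard = 3)
    (hlt : Fintype.card V < 6 * (Set.range p)ᶜ.ncard) (hx : x ∈ pivotCandidates G p) :
    ∃ l, IsPivot G p r x l := by
  by_contra! hno
  have hcount := hp.four_mul_ncard_compl_range_add_le hcubic
  have hle : (Set.range p)ᶜ.ncard ≤ (pivotCandidates G p \ {x}).ncard := by
    refine hp.ncard_compl_range_le hcubic fun l hl => ?_
    obtain ⟨v, hv, hvl⟩ := hp.exists_mem_pivotCandidates hcubic hl
    exact ⟨v, ⟨hv, by rintro rfl; exact hno l hvl⟩, hvl⟩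
  have := Set.ncard_sdiff_singleton_add_one hx
  omega

/-- The tree of the parent map `p` with the edge from `v` to its parent traded for an edge from
`l` to that parent. -/
def pivotExchange (p : V → V) (v l : V) : SimpleGraph V :=
  exchangeEdge (parentGraph p) (p v) v (p v) l

theorem IsPivot.parentGraph_adj (hp : IsGreedyDFS G .univ r p) (hv : IsPivot G p r v l) :
    (parentGraph p).Adj (p v) v :=
  (parentGraph_adj_parent (hp.ne_parent (hv.ne_root hp))).symm

theorem IsPivot.reachable_deleteEdges (hp : IsGreedyDFS G .univ r p) (hv : IsPivot G p r v l) :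
    ((parentGraph p).deleteEdges {s(p v, v)}).Reachable v l :=
  reachable_deleteEdges_parentGraph (hp.not_isAncestor_parent (hv.ne_root hp)) hv.isAncestor

theorem IsPivot.isTree_pivotExchange (hp : IsGreedyDFS G .univ r p) (hv : IsPivot G p r v l) :
    (pivotExchange p v l).IsTree :=
  isTree_exchangeEdge hp.isTree (hv.parentGraph_adj hp) .rfl (hv.reachable_deleteEdges hp)

theorem IsPivot.leafSet_pivotExchange_subset (hp : IsGreedyDFS G .univ r p)
    (hv : IsPivot G p r v l) :
    leafSet (pivotExchange p v l) ⊆ insert v (leafSet (parentGraph p) \ {l}) := by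
  have hgrand : (pivotExchange p v l).Adj (p v) (p (p v)) := by
    refine exchangeEdge_adj_of_adj (parentGraph_adj_parent (hp.ne_parent hv.parent_ne_root)) ?_
    exact fun h => hp.not_isAncestor_parent (hv.ne_root hp) ⟨1, h⟩
  have hnew : (pivotExchange p v l).Adj (p v) l :=
    .inr ((edge_adj ..).2 ⟨.inl ⟨rfl, rfl⟩, hv.adj.ne⟩)
  have hpv : p v ∉ leafSet (pivotExchange p v l) := fun h =>
    hv.notMem_range ⟨_, eq_of_adj_of_adj_of_mem_leafSet h hgrand hnew⟩
  intro x hx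
  have hsub := leafSet_exchangeEdge_subset hp.isTree (hv.parentGraph_adj hp) .rfl
    (hv.reachable_deleteEdges hp) hx
  obtain h | h := hsub.resolve_left fun h => hpv (h ▸ hx)
  · exact .inl h
  · exact .inr ⟨h.1, fun hxl => h.2 (.inr hxl)⟩

theorem IsPivot.root_mem_leafSet_pivotExchange_iff (hp : IsGreedyDFS G .univ r p)
    (hv : IsPivot G p r v l) :
    r ∈ leafSet (pivotExchange p v l) ↔ r ∈ leafSet (parentGraph p) := by
  have hrl : r ≠ l := fun h => hv.notMem_range ⟨r, h ▸ hp.parent_root⟩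
  exact mem_leafSet_congr (exchangeEdge_adj_iff hv.parent_ne_root.symm (hv.ne_root hp).symm
    hv.parent_ne_root.symm hrl)

theorem IsGreedyDFS.ncard_leafSet_parentGraph_le [Finite V] (hp : IsGreedyDFS G .univ r p) :
    (leafSet (parentGraph p)).ncard ≤ (Set.range p)ᶜ.ncard + 1 :=
  (Set.ncard_le_ncard hp.leafSet_subset).trans (Set.ncard_insert_le ..)

theorem IsGreedyDFS.exists_adj_mem_leafSet_or_mem_pivotCandidates [Finite V]
    (hp : IsGreedyDFS G .univ r p)
    (hcubic : ∀ x, (G.neighborSet x).ncard = 3) (hr : r ∈ leafSet (parentGraph p)) :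
    ∃ x, G.Adj r x ∧ (x ∈ leafSet (parentGraph p) ∨ x ∈ pivotCandidates G p) := by
  obtain ⟨w, hw⟩ := Set.ncard_eq_one.1 hr
  have hdeg : 1 < (G.neighborSet r).ncard := by rw [hcubic r]; omega
  obtain ⟨x, hrx, hxw⟩ := Set.exists_ne_of_one_lt_ncard hdeg w
  have hxr : x ≠ r := (G.ne_of_adj hrx).symm
  have hpx : r ≠ p x := fun h => hxw (by
    simpa [hw] using ((parentGraph p).mem_neighborSet r x).2 ⟨hxr.symm, .inr h.symm⟩)
  refine ⟨x, hrx, ?_⟩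
  by_cases hx : x ∈ Set.range p
  · refine .inr ⟨hx, ?_⟩
    rw [← Set.ncard_pair hpx]
    refine Set.ncard_le_ncard (Set.pair_subset ?_ ?_)
    exacts [⟨hrx.symm, hp.isAncestor_root x⟩,
      ⟨hp.adj_parent x trivial hxr, isAncestor_parent p x⟩]
  · exact .inl (mem_leafSet_parentGraph hx)

theorem IsPivot.exists_isTree [Finite V] (hp : IsGreedyDFS G .univ r p)
    (hx : IsPivot G p r x l) (hr : r ∈ leafSet (parentGraph p)) :
    ∃ T ≤ G, T.IsTree ∧ ((leafSet T).ncard ≤ (Set.range p)ᶜ.ncard ∨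
      (leafSet T).ncard ≤ (Set.range p)ᶜ.ncard + 1 ∧ r ∈ leafSet T ∧ x ∈ leafSet T) := by
  have hl : l ∈ leafSet (parentGraph p) := mem_leafSet_parentGraph hx.notMem_range
  have hcard := Set.ncard_sdiff_singleton_add_one hl
  have hle := hp.ncard_leafSet_parentGraph_le
  have hsub := hx.leafSet_pivotExchange_subset hp
  refine ⟨pivotExchange p x l, exchangeEdge_le hp.parentGraph_le hx.adj,
    hx.isTree_pivotExchange hp, ?_⟩
  by_cases hxT : x ∈ leafSet (pivotExchange p x l)
  · refine .inr ⟨?_, (hx.root_mem_leafSet_pivotExchange_iff hp).2 hr, hxT⟩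
    exact ((Set.ncard_le_ncard hsub).trans (Set.ncard_insert_le ..)).trans (hcard.trans_le hle)
  · have := Set.ncard_le_ncard ((Set.subset_insert_iff_of_notMem hxT).1 hsub)
    exact .inl (by omega)

theorem IsGreedyDFS.exists_isTree_leafSet_ncard_le_of_root_mem [Fintype V]
    (hp : IsGreedyDFS G .univ r p)
    (hcubic : ∀ x, (G.neighborSet x).ncard = 3) {k : ℕ} (hk : 2 ≤ k)
    (hLk : (Set.range p)ᶜ.ncard ≤ k) (hlt : Fintype.card V < 6 * (Set.range p)ᶜ.ncard)
    (hr : r ∈ leafSet (parentGraph p)) :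
    ∃ T ≤ G, T.IsTree ∧ (leafSet T).ncard ≤ k := by
  obtain ⟨x, hrx, hx | hx⟩ := hp.exists_adj_mem_leafSet_or_mem_pivotCandidates hcubic hr
  · exact exists_isTree_leafSet_ncard_le_of_adj_leaves hk hp.parentGraph_le hp.isTree
      (hp.ncard_leafSet_parentGraph_le.trans (by omega)) hr hx hrx
  · obtain ⟨l, hl⟩ := hp.exists_isPivot_of_mem_pivotCandidates hcubic hlt hx
    obtain ⟨T, hTG, hT, hle | ⟨hle, hrT, hxT⟩⟩ := hl.exists_isTree hp hr
    · exact ⟨T, hTG, hT, hle.trans hLk⟩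
    · exact exists_isTree_leafSet_ncard_le_of_adj_leaves hk hTG hT (hle.trans (by omega))
        hrT hxT hrx

end Cubic

theorem stmt_2_general {V : Type*} [Fintype V] (G : SimpleGraph V) [DecidableRel G.Adj]
    (hG : G.Connected) (hreg : ∀ v : V, G.degree v = 3)
    (hn : 6 ≤ Fintype.card V) :
    ∃ T : SimpleGraph V, T ≤ G ∧ T.IsTree ∧
      {v : V | (T.neighborSet v).ncard = 1}.ncard ≤ Fintype.card V / 6 + 1 := by
  have hcubic (v : V) : (G.neighborSet v).ncard = 3 := by
    rw [← hreg v, ← card_neighborSet_eq_degree, Set.ncard_eq_toFinset_card', Set.toFinset_card]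
  obtain ⟨r⟩ := hG.nonempty
  obtain ⟨p, hp⟩ := (cutConnected_univ hG).exists_isGreedyDFS (Set.mem_univ r)
  have hcount := hp.six_mul_ncard_compl_range_le hcubic
  by_cases hr : r ∈ leafSet (parentGraph p)
  · obtain hle | hlt := le_or_gt (6 * (Set.range p)ᶜ.ncard) (Fintype.card V)
    · exact ⟨_, hp.parentGraph_le, hp.isTree, hp.ncard_leafSet_parentGraph_le.trans (by omega)⟩
    · exact hp.exists_isTree_leafSet_ncard_le_of_root_mem hcubic (by omega) (by omega) hlt hr
  · exact ⟨_, hp.parentGraph_le, hp.isTree, (Set.ncard_le_ncard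
      ((Set.subset_insert_iff_of_notMem hr).1 hp.leafSet_subset)).trans (by omega)⟩

/-- Let `G` be a finite connected `3`-regular simple graph on `n ≥ 8` vertices. Then `G` has
a spanning tree with at most `⌊(2n + 4)/9⌋` leaves. -/
theorem stmt_2 {V : Type*} [Fintype V] (G : SimpleGraph V) [DecidableRel G.Adj]
    (hG : G.Connected) (hreg : ∀ v : V, G.degree v = 3)
    (hn : 8 ≤ Fintype.card V) :
    ∃ T : SimpleGraph V, T ≤ G ∧ T.IsTree ∧
      {v : V | (T.neighborSet v).ncard = 1}.ncard ≤ (2 * Fintype.card V + 4) / 9 := by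
  obtain ⟨T, hTG, hT, hle⟩ := stmt_2_general G hG hreg (by omega)
  exact ⟨T, hTG, hT, hle.trans (by omega)⟩
end

section
/- (Broersma–Tuinstra) Let k ≥ 2 be an integer and let G be a finite connected simple graph on n vertices. If for every pair of distinct nonadjacent vertices u, v of G one has deg(u) + deg(v) ≥ n − k + 1, then G has a spanning tree with at most k leaves. -/
/-!
Choose a spanning tree `T` of `G` with the fewest leaves, say `ℓ ≥ 3` of them. Exchanging an edge
of `T` can never lower the number of leaves. Hence no two leaves of `T` are adjacent in `G`:
otherwise insert that edge and remove an edge of the resulting cycle at a vertex where `T` branches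
off it.

Root `T` at a leaf `u`. For a `G`-neighbour `x` of `u` with parent `a ≠ u`, replacing the edge `ax`
by `ux` turns `u` into an inner vertex and must turn `a` into a leaf, and the new tree is again
optimal. So `a` has degree two in `T` and is not `G`-adjacent to any other leaf `v`. The former
shows that `x` is the only `G`-neighbour of `u` whose parent is `a`; the latter that the parents of
the `G`-neighbours of `u`, the `G`-neighbours of `v`, and the leaves other than `u` are disjoint.
Therefore `deg u + deg v + (ℓ - 1) ≤ n`.
-/

open SimpleGraph

namespace BroersmaTuinstra

variable {V : Type*} {G T : SimpleGraph V} {a b r u v w x y : V}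

/-- The leaves of a graph: the vertices of degree one. The degree is taken as a `Set.ncard`, so
that no local finiteness is required. -/
def leaves (T : SimpleGraph V) : Set V := {v | (T.neighborSet v).ncard = 1}

lemma mem_leaves : v ∈ leaves T ↔ ∃ w, T.neighborSet v = {w} := Set.ncard_eq_one

lemma subsingleton_neighborSet_of_mem_leaves (hv : v ∈ leaves T) :
    (T.neighborSet v).Subsingleton := by
  obtain ⟨w, hw⟩ := mem_leaves.1 hv
  exact hw ▸ Set.subsingleton_singleton

lemma not_adj_of_mem_leaves (hT : T.Connected) (hu : u ∈ leaves T) (hv : v ∈ leaves T)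
    (hwu : w ≠ u) (hwv : w ≠ v) : ¬ T.Adj u v := by
  intro huv
  obtain ⟨p, hp⟩ := hT.exists_isPath u w
  have hsnd : p.snd = v :=
    subsingleton_neighborSet_of_mem_leaves hu (p.adj_snd (p.not_nil_of_ne hwu.symm)) huv
  exact hp.isTrail.not_mem_support_of_subsingleton_neighborSet huv.ne' hwv.symm
    (subsingleton_neighborSet_of_mem_leaves hv) (hsnd ▸ p.getVert_mem_support 1)

/-- The graph obtained from `T` by removing the edge `ab` and inserting the edge `ux`. -/
def exchange (T : SimpleGraph V) (a b u x : V) : SimpleGraph V :=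
  T.deleteEdges {s(a, b)} ⊔ edge u x

lemma exchange_le (hTG : T ≤ G) (hux : G.Adj u x) : exchange T a b u x ≤ G :=
  sup_le ((deleteEdges_le _).trans hTG) ((edge_le_iff G).2 (.inr hux))

lemma exchange_adj_inserted (hux : u ≠ x) : (exchange T a b u x).Adj u x :=
  .inr ((edge_adj ..).2 ⟨.inl ⟨rfl, rfl⟩, hux⟩)

lemma exchange_adj_of_ne (hyw : T.Adj y w) (hne : s(y, w) ≠ s(a, b)) :
    (exchange T a b u x).Adj y w :=
  .inl (deleteEdges_adj.2 ⟨hyw, hne⟩)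

lemma not_reachable_deleteEdges_of_isPath (hT : T.IsAcyclic) {p : T.Walk u x} (hp : p.IsPath)
    (hab : s(a, b) ∈ p.edges) : ¬ (T.deleteEdges {s(a, b)}).Reachable u x := by
  classical
  rw [reachable_deleteEdges_iff_exists_walk]
  rintro ⟨q, hq⟩
  have hqp : q.toPath = ⟨p, hp⟩ := (hT.subsingleton_path u x).elim _ _
  exact hq (q.edges_toPath_subset_edges (hqp ▸ hab))

lemma connected_exchange (hT : T.Connected) (hux : u ≠ x) (hnadj : ¬ T.Adj u x)
    {p : T.Walk u x} (hp : p.IsPath) (hab : s(a, b) ∈ p.edges) :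
    (exchange T a b u x).Connected := by
  have hle : T ≤ T ⊔ edge u x := le_sup_left
  have hxu : (T ⊔ edge u x).Adj x u := .inr ((edge_adj ..).2 ⟨.inr ⟨rfl, rfl⟩, hux.symm⟩)
  have hcycle : ((p.mapLe hle).cons hxu).IsCycle := by
    refine (Walk.cons_isCycle_iff _ _).2 ⟨hp.mapLe hle, fun h => hnadj ?_⟩
    rw [Walk.edges_mapLe_eq_edges] at h
    exact (p.adj_of_mem_edges h).symm
  have hnb : ¬ (T ⊔ edge u x).IsBridge s(a, b) := fun h =>
    h.notMem_edges_of_isCycle hcycle (by simp [hab])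
  refine ((hT.mono hle).connected_delete_edge_of_not_isBridge hnb).mono ?_
  rw [deleteEdges_sup]
  exact sup_le_sup_left (deleteEdges_le _) _

theorem isTree_exchange (hT : T.IsTree) (hux : u ≠ x) (hnadj : ¬ T.Adj u x)
    {p : T.Walk u x} (hp : p.IsPath) (hab : s(a, b) ∈ p.edges) :
    (exchange T a b u x).IsTree where
  connected := connected_exchange hT.connected hux hnadj hp hab
  isAcyclic := (hT.isAcyclic.anti (deleteEdges_le _)).sup_edge_of_not_reachable
    (not_reachable_deleteEdges_of_isPath hT.isAcyclic hp hab)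

theorem leaves_exchange_subset (hT : T.Preconnected) (hux : u ≠ x) (hnadj : ¬ T.Adj u x) :
    leaves (exchange T a b u x) ⊆ insert a (insert b (leaves T \ {u, x})) := by
  intro y hy
  by_cases hya : y = a
  · exact .inl hya
  by_cases hyb : y = b
  · exact .inr (.inl hyb)
  have hadj {z : V} (hz : T.Adj y z) : (exchange T a b u x).Adj y z :=
    exchange_adj_of_ne hz (by simp [hya, hyb])
  have hsub := subsingleton_neighborSet_of_mem_leaves hy
  have : Nontrivial V := ⟨u, x, hux⟩
  obtain ⟨z, hz⟩ := hT.exists_adj_of_nontrivial y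
  have hleaf : y ∈ leaves T :=
    mem_leaves.2 ⟨z, Set.eq_singleton_iff_unique_mem.2
      ⟨hz, fun _ hw => hsub (hadj hw) (hadj hz)⟩⟩
  refine .inr (.inr ⟨hleaf, ?_⟩)
  rintro (rfl | rfl)
  · exact hnadj (hsub (exchange_adj_inserted hux) (hadj hz) ▸ hz)
  · exact hnadj (hsub (exchange_adj_inserted hux).symm (hadj hz) ▸ hz).symm

/-- `T` is a spanning tree of `G` with the fewest leaves among all spanning trees of `G`. -/
structure IsLeafMinimal (G T : SimpleGraph V) : Prop where
  le : T ≤ G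
  isTree : T.IsTree
  ncard_leaves_le : ∀ S ≤ G, S.IsTree → (leaves T).ncard ≤ (leaves S).ncard

lemma exists_isLeafMinimal [Finite V] (hG : G.Connected) : ∃ T, IsLeafMinimal G T := by
  obtain ⟨T, ⟨hTG, hT⟩, hmin⟩ := Set.exists_min_image {S : SimpleGraph V | S ≤ G ∧ S.IsTree}
    (fun S => (leaves S).ncard) (Set.toFinite _) hG.exists_isTree_le
  exact ⟨T, hTG, hT, fun S hSG hS => hmin S ⟨hSG, hS⟩⟩

lemma exists_mem_edges_and_ne_adj_of_mem_leaves (hT : T.Connected) (hu : u ∈ leaves T)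
    (hv : v ∈ leaves T) {p : T.Walk u v} (hp : p.IsPath) (huv : u ≠ v) (hw : w ∉ p.support) :
    ∃ a b c d, s(a, b) ∈ p.edges ∧ T.Adj a c ∧ T.Adj a d ∧ c ≠ b ∧ d ≠ b ∧ c ≠ d := by
  have hnil : ¬ p.Nil := p.not_nil_of_ne huv
  obtain ⟨q⟩ := hT u w
  obtain ⟨⟨⟨a, c⟩, hac⟩, -, ha : a ∈ p.support, hc : c ∉ p.support⟩ :=
    q.exists_boundary_dart {z | z ∈ p.support} p.start_mem_support hw
  have hau : a ≠ u := by
    rintro rfl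
    obtain rfl : p.snd = c := subsingleton_neighborSet_of_mem_leaves hu (p.adj_snd hnil) hac
    exact hc (p.getVert_mem_support _)
  have hav : a ≠ v := by
    rintro rfl
    obtain rfl : p.penultimate = c :=
      subsingleton_neighborSet_of_mem_leaves hv (p.adj_penultimate hnil).symm hac
    exact hc (p.getVert_mem_support _)
  obtain ⟨i, rfl, hi⟩ := Walk.mem_support_iff_exists_getVert.1 ha
  have hi0 : i ≠ 0 := by rintro rfl; exact hau p.getVert_zero
  have hil : i ≠ p.length := by rintro rfl; exact hav p.getVert_length
  obtain ⟨b, d, hbd, hN⟩ := Set.ncard_eq_two.1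
    (hp.ncard_neighborSet_toSubgraph_internal_eq_two hi0 (by lia))
  have hb : p.toSubgraph.Adj (p.getVert i) b := hN.ge (.inl rfl)
  have hd : p.toSubgraph.Adj (p.getVert i) d := hN.ge (.inr rfl)
  have hmem {z : V} (hz : p.toSubgraph.Adj (p.getVert i) z) : c ≠ z := by
    rintro rfl
    exact hc (p.mem_verts_toSubgraph.1 hz.snd_mem)
  exact ⟨p.getVert i, b, c, d, Walk.adj_toSubgraph_iff_mem_edges.1 hb, hac, hd.adj_sub,
    hmem hb, hbd.symm, hmem hd⟩

theorem IsLeafMinimal.not_adj [Finite V] (hT : IsLeafMinimal G T) (hleaves : 2 < (leaves T).ncard)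
    (hu : u ∈ leaves T) (hv : v ∈ leaves T) : ¬ G.Adj u v := by
  intro hadj
  have huv : u ≠ v := hadj.ne
  obtain ⟨w, hw, hwuv⟩ : ∃ w ∈ leaves T, w ∉ ({u, v} : Set V) :=
    Set.exists_mem_notMem_of_ncard_lt_ncard ((Set.ncard_pair huv).trans_lt hleaves)
  obtain ⟨hwu, hwv⟩ : w ≠ u ∧ w ≠ v := by simpa using hwuv
  have hnadj : ¬ T.Adj u v := not_adj_of_mem_leaves hT.isTree.connected hu hv hwu hwv
  obtain ⟨p, hp⟩ := hT.isTree.connected.exists_isPath u v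
  have hwp : w ∉ p.support := hp.isTrail.not_mem_support_of_subsingleton_neighborSet hwu hwv
    (subsingleton_neighborSet_of_mem_leaves hw)
  obtain ⟨a, b, c, d, hab, hac, had, hcb, hdb, hcd⟩ :=
    exists_mem_edges_and_ne_adj_of_mem_leaves hT.isTree.connected hu hv hp huv hwp
  have ha : a ∉ leaves (exchange T a b u v) := fun ha =>
    hcd (subsingleton_neighborSet_of_mem_leaves ha (exchange_adj_of_ne hac (by grind))
      (exchange_adj_of_ne had (by grind)))
  have hsub : leaves (exchange T a b u v) ⊆ insert b (leaves T \ {u, v}) :=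
    (Set.subset_insert_iff_of_notMem ha).1
      (leaves_exchange_subset hT.isTree.connected.preconnected huv hnadj)
  have hmin := hT.ncard_leaves_le _ (exchange_le hT.le hadj)
    (isTree_exchange hT.isTree huv hnadj hp hab)
  have hle := (Set.ncard_le_ncard hsub).trans (Set.ncard_insert_le _ _)
  rw [Set.ncard_sdiff (Set.pair_subset hu hv), Set.ncard_pair huv] at hle
  lia

/-- `a` is the parent of `x` in the tree `T` rooted at `r`: it is the neighbour of `x` that is
closer to `r`. -/
structure IsParent (T : SimpleGraph V) (r a x : V) : Prop where
  adj : T.Adj a x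
  dist_eq : T.dist r x = T.dist r a + 1

lemma exists_isParent (hT : T.Connected) (hx : x ≠ r) : ∃ a, IsParent T r a x := by
  obtain ⟨p, hp⟩ := hT.exists_walk_length_eq_dist r x
  have hnil : ¬ p.Nil := p.not_nil_of_ne hx.symm
  have hadj := p.adj_penultimate hnil
  have hle : T.dist r p.penultimate ≤ p.length - 1 := by
    simpa using dist_le p.dropLast
  have hpos := hT.pos_dist_of_ne hx.symm
  have := hadj.diff_dist_adj (u := r)
  exact ⟨p.penultimate, hadj, by lia⟩

namespace IsParent

lemma exists_isPath_mem_edges (h : IsParent T r a x) (hT : T.Connected) :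
    ∃ p : T.Walk r x, p.IsPath ∧ s(a, x) ∈ p.edges := by
  obtain ⟨q, hq⟩ := hT.exists_walk_length_eq_dist r a
  refine ⟨q.concat h.adj, Walk.isPath_of_length_eq_dist _ ?_, by simp [Walk.edges_concat]⟩
  rw [Walk.length_concat, hq, h.dist_eq]

lemma not_adj_root (h : IsParent T r a x) (hT : T.Connected) (ha : a ≠ r) : ¬ T.Adj r x := by
  intro hrx
  have := h.dist_eq
  have := dist_eq_one_iff_adj.2 hrx
  have := hT.pos_dist_of_ne ha.symm
  lia

lemma isTree_exchange (h : IsParent T r a x) (hT : T.IsTree) (ha : a ≠ r) :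
    (exchange T a x r x).IsTree := by
  obtain ⟨p, hp, hmem⟩ := h.exists_isPath_mem_edges hT.connected
  have hrx : r ≠ x := by
    rintro rfl
    simpa using h.dist_eq
  exact BroersmaTuinstra.isTree_exchange hT hrx (h.not_adj_root hT.connected ha) hp hmem

lemma notMem_leaves (h : IsParent T r a x) (hT : T.Connected) (ha : a ≠ r) : a ∉ leaves T := by
  intro hleaf
  obtain ⟨c, hc⟩ := exists_isParent hT ha
  obtain rfl : c = x := subsingleton_neighborSet_of_mem_leaves hleaf hc.adj.symm h.adj
  have := h.dist_eq
  have := hc.dist_eq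
  lia

end IsParent

namespace IsLeafMinimal

variable [Finite V]

theorem leaves_exchange_eq (hT : IsLeafMinimal G T) (hleaves : 2 < (leaves T).ncard)
    (hu : u ∈ leaves T) (hux : G.Adj u x) (h : IsParent T u a x) (ha : a ≠ u) :
    leaves (exchange T a x u x) = insert a (leaves T \ {u}) := by
  have hconn := hT.isTree.connected
  have hnadj := h.not_adj_root hconn ha
  have hx : x ∉ leaves (exchange T a x u x) := by
    intro hx
    have hxT : x ∈ leaves T := by
      refine mem_leaves.2 ⟨a, Set.eq_singleton_iff_unique_mem.2 ⟨h.adj.symm, fun z hz => ?_⟩⟩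
      by_contra hza
      obtain rfl : z = u := subsingleton_neighborSet_of_mem_leaves hx
        (exchange_adj_of_ne hz (by simp [hza, h.adj.ne']))
        (exchange_adj_inserted hux.ne).symm
      exact hnadj hz.symm
    exact hT.not_adj hleaves hu hxT hux
  have hsub : leaves (exchange T a x u x) ⊆ insert a (leaves T \ {u}) := by
    have := leaves_exchange_subset (a := a) (b := x) hconn.preconnected hux.ne hnadj
    grind
  refine Set.eq_of_subset_of_ncard_le hsub ?_
  rw [Set.ncard_exchange (h.notMem_leaves hconn ha) hu]
  exact hT.ncard_leaves_le _ (exchange_le hT.le hux) (h.isTree_exchange hT.isTree ha)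

lemma ncard_leaves_exchange (hT : IsLeafMinimal G T) (hleaves : 2 < (leaves T).ncard)
    (hu : u ∈ leaves T) (hux : G.Adj u x) (h : IsParent T u a x) (ha : a ≠ u) :
    (leaves (exchange T a x u x)).ncard = (leaves T).ncard := by
  rw [hT.leaves_exchange_eq hleaves hu hux h ha,
    Set.ncard_exchange (h.notMem_leaves hT.isTree.connected ha) hu]

lemma isLeafMinimal_exchange (hT : IsLeafMinimal G T) (hleaves : 2 < (leaves T).ncard)
    (hu : u ∈ leaves T) (hux : G.Adj u x) (h : IsParent T u a x) (ha : a ≠ u) :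
    IsLeafMinimal G (exchange T a x u x) where
  le := exchange_le hT.le hux
  isTree := h.isTree_exchange hT.isTree ha
  ncard_leaves_le S hSG hS :=
    (hT.ncard_leaves_exchange hleaves hu hux h ha).trans_le (hT.ncard_leaves_le S hSG hS)

theorem not_adj_parent (hT : IsLeafMinimal G T) (hleaves : 2 < (leaves T).ncard)
    (hu : u ∈ leaves T) (hux : G.Adj u x) (h : IsParent T u a x) (hv : v ∈ leaves T)
    (hvu : v ≠ u) : ¬ G.Adj v a := by
  obtain rfl | ha := eq_or_ne a u
  · exact hT.not_adj hleaves hv hu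
  have heq := hT.leaves_exchange_eq hleaves hu hux h ha
  refine (hT.isLeafMinimal_exchange hleaves hu hux h ha).not_adj ?_ ?_ ?_
  · rwa [hT.ncard_leaves_exchange hleaves hu hux h ha]
  · exact heq.ge (.inr ⟨hv, hvu⟩)
  · exact heq.ge (.inl rfl)

theorem eq_of_isParent (hT : IsLeafMinimal G T) (hleaves : 2 < (leaves T).ncard)
    (hu : u ∈ leaves T) (hux : G.Adj u x) (hx : IsParent T u a x) (hy : IsParent T u a y) :
    x = y := by
  obtain rfl | ha := eq_or_ne a u
  · exact subsingleton_neighborSet_of_mem_leaves hu hx.adj hy.adj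
  obtain ⟨c, hc⟩ := exists_isParent hT.isTree.connected ha
  have hcdist := hc.dist_eq
  have hxdist := hx.dist_eq
  have hydist := hy.dist_eq
  have hleaf : a ∈ leaves (exchange T a x u x) :=
    (hT.leaves_exchange_eq hleaves hu hux hx ha).ge (.inl rfl)
  by_contra hxy
  have hcx : c ≠ x := by rintro rfl; lia
  obtain rfl : c = y := subsingleton_neighborSet_of_mem_leaves hleaf
    (exchange_adj_of_ne hc.adj.symm (by grind)) (exchange_adj_of_ne hy.adj (by grind))
  lia

theorem ncard_add_ncard_add_ncard_leaves_le (hT : IsLeafMinimal G T)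
    (hleaves : 2 < (leaves T).ncard) (hu : u ∈ leaves T) (hv : v ∈ leaves T) (huv : u ≠ v) :
    (G.neighborSet u).ncard + (G.neighborSet v).ncard + (leaves T).ncard ≤ Nat.card V + 1 := by
  have hparent (x : V) (hx : G.Adj u x) : ∃ a, IsParent T u a x :=
    exists_isParent hT.isTree.connected hx.ne'
  choose! parent hparent using hparent
  have hinj : Set.InjOn parent (G.neighborSet u) := fun x hx y hy hxy =>
    hT.eq_of_isParent hleaves hu hx (hparent x hx) (hxy ▸ hparent y hy)
  have hdisj₁ : Disjoint (parent '' G.neighborSet u) (G.neighborSet v) := by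
    rw [Set.disjoint_left]
    rintro _ ⟨x, hx, rfl⟩ hvx
    exact hT.not_adj_parent hleaves hu hx (hparent x hx) hv huv.symm hvx
  have hdisj₂ : Disjoint (parent '' G.neighborSet u ∪ G.neighborSet v) (leaves T \ {u}) := by
    rw [Set.disjoint_left]
    rintro w (⟨x, hx, rfl⟩ | hvw) ⟨hw, hwu⟩
    · exact (hparent x hx).notMem_leaves hT.isTree.connected hwu hw
    · exact hT.not_adj hleaves hv hw hvw
  calc (G.neighborSet u).ncard + (G.neighborSet v).ncard + (leaves T).ncard
      = (parent '' G.neighborSet u ∪ G.neighborSet v ∪ leaves T \ {u}).ncard + 1 := by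
        rw [Set.ncard_union_eq hdisj₂, Set.ncard_union_eq hdisj₁, hinj.ncard_image,
          add_assoc _ _ 1, Set.ncard_sdiff_singleton_add_one hu]
    _ ≤ Nat.card V + 1 := by grw [Set.ncard_le_card]

end IsLeafMinimal

end BroersmaTuinstra

open BroersmaTuinstra

/-- (Broersma–Tuinstra) Let `k ≥ 2` and let `G` be a finite connected simple graph on `n`
vertices. If every pair of distinct nonadjacent vertices `u, v` satisfies
`deg u + deg v ≥ n - k + 1`, then `G` has a spanning tree with at most `k` leaves. -/
theorem stmt_4 {V : Type*} [Fintype V] (G : SimpleGraph V) [DecidableRel G.Adj]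
    (hG : G.Connected) (k : ℕ) (hk : 2 ≤ k)
    (hdeg : ∀ u v : V, u ≠ v → ¬ G.Adj u v →
      Fintype.card V - k + 1 ≤ G.degree u + G.degree v) :
    ∃ T : SimpleGraph V, T ≤ G ∧ T.IsTree ∧
      {v : V | (T.neighborSet v).ncard = 1}.ncard ≤ k := by
  obtain ⟨T, hT⟩ := exists_isLeafMinimal hG
  refine ⟨T, hT.le, hT.isTree, show (leaves T).ncard ≤ k from ?_⟩
  by_contra! hlt
  have hleaves : 2 < (leaves T).ncard := hk.trans_lt hlt
  obtain ⟨u, hu, v, hv, huv⟩ := (Set.one_lt_ncard).1 (one_lt_two.trans hleaves)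
  have hlower := hdeg u v huv (hT.not_adj hleaves hu hv)
  have hupper := hT.ncard_add_ncard_add_ncard_leaves_le hleaves hu hv huv
  have hdegree (w : V) : (G.neighborSet w).ncard = G.degree w := by
    rw [Set.ncard_eq_toFinset_card', ← neighborFinset_def, card_neighborFinset_eq_degree]
  rw [hdegree, hdegree, Nat.card_eq_fintype_card] at hupper
  lia
end

section
/- (Win) Let k ≥ 2 and m ≥ 1 be integers and let G be a finite m-connected simple graph. If the independence number α(G) satisfies α(G) ≤ m + k − 1, then G has a spanning tree with at most k leaves. -/
/-!
Among all paths choose `l` such that `G - l` has the smallest independence number and, subject to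
this, such that a smallest possible union `H` of components of `G - l` occurs. If `l` misses a
vertex, then at least `m` vertices of `l` have a neighbour in `H`. Starting at the first vertex of
`l`, and after each of these `m` vertices, take the shortest stretch of `l` that raises the
independence number of `G - l - H` when added to it; it exists, and ends before the next vertex with
a neighbour in `H`, because otherwise the detour through `H` would improve `l`. No path through
`G - l - H` joins two of these `m + 1` stretches, since otherwise rerouting `l` along that path and
through `H` would again improve `l`. Hence the gains of the stretches add up and
`α(G - l) + m + 1 ≤ α(G)`.

Now extend `l` to a spanning tree depth first. Each new branch ends at a vertex with no neighbour
outside the tree, so it lowers the independence number of the remaining graph by at least one. The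
tree therefore has at most `2 + α(G - l)` leaves, which is at most `k`.
-/

namespace WinTheorem

variable {V : Type*} {G : SimpleGraph V}

/-- The independence number of the subgraph of `G` induced on `U`. -/
noncomputable def indepNumOn (G : SimpleGraph V) (U : Set V) : ℕ :=
  (G.induce U).indepNum

section IndepNumOn

theorem exists_isIndepSet_ncard_eq (G : SimpleGraph V) (U : Set V) :
    ∃ s ⊆ U, G.IsIndepSet s ∧ s.ncard = indepNumOn G U := by
  obtain ⟨t, ht⟩ := (G.induce U).exists_isNIndepSet_indepNum
  refine ⟨(↑) '' (t : Set U), by simp, ?_, ?_⟩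
  · rintro _ ⟨x, hx, rfl⟩ _ ⟨y, hy, rfl⟩ hxy
    exact ht.isIndepSet hx hy (ne_of_apply_ne _ hxy)
  · rw [Set.ncard_image_of_injective _ Subtype.val_injective, Set.ncard_coe_finset]
    exact ht.card_eq

@[simp]
theorem indepNumOn_empty : indepNumOn G ∅ = 0 := by
  obtain ⟨s, hs, -, hcard⟩ := exists_isIndepSet_ncard_eq G ∅
  rw [← hcard, Set.subset_empty_iff.1 hs, Set.ncard_empty]

variable [Finite V] {s U W A B : Set V}

theorem ncard_le_indepNumOn (hsU : s ⊆ U) (hs : G.IsIndepSet s) : s.ncard ≤ indepNumOn G U := by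
  have hfin := Set.toFinite ((↑) ⁻¹' s : Set U)
  have hindep : (G.induce U).IsIndepSet hfin.toFinset := by
    intro x hx y hy hxy
    simp only [Set.Finite.coe_toFinset, Set.mem_preimage] at hx hy
    exact hs hx hy (Subtype.coe_ne_coe.2 hxy)
  calc s.ncard = ((↑) ⁻¹' s : Set U).ncard :=
        (Set.ncard_preimage_of_injective_subset_range Subtype.val_injective (by simpa)).symm
    _ = hfin.toFinset.card := Set.ncard_eq_toFinset_card _ hfin
    _ ≤ indepNumOn G U := hindep.card_le_indepNum

theorem indepNumOn_mono (h : U ⊆ W) : indepNumOn G U ≤ indepNumOn G W := by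
  obtain ⟨s, hsU, hs, hcard⟩ := exists_isIndepSet_ncard_eq G U
  exact hcard ▸ ncard_le_indepNumOn (hsU.trans h) hs

theorem indepNumOn_union_le (A B : Set V) :
    indepNumOn G (A ∪ B) ≤ indepNumOn G A + indepNumOn G B := by
  obtain ⟨s, hsAB, hs, hcard⟩ := exists_isIndepSet_ncard_eq G (A ∪ B)
  calc indepNumOn G (A ∪ B) = (s ∩ A ∪ s ∩ B).ncard := by
        rw [← Set.inter_union_distrib_left, Set.inter_eq_left.2 hsAB, hcard]
    _ ≤ (s ∩ A).ncard + (s ∩ B).ncard := Set.ncard_union_le _ _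
    _ ≤ indepNumOn G A + indepNumOn G B := Nat.add_le_add
        (ncard_le_indepNumOn Set.inter_subset_right (hs.mono Set.inter_subset_left))
        (ncard_le_indepNumOn Set.inter_subset_right (hs.mono Set.inter_subset_left))

theorem indepNumOn_union (hdisj : Disjoint A B) (hadj : ∀ a ∈ A, ∀ b ∈ B, ¬ G.Adj a b) :
    indepNumOn G (A ∪ B) = indepNumOn G A + indepNumOn G B := by
  refine le_antisymm (indepNumOn_union_le A B) ?_
  obtain ⟨s, hsA, hs, hscard⟩ := exists_isIndepSet_ncard_eq G A
  obtain ⟨t, htB, ht, htcard⟩ := exists_isIndepSet_ncard_eq G B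
  rw [← hscard, ← htcard, ← Set.ncard_union_eq (hdisj.mono hsA htB)]
  refine ncard_le_indepNumOn (Set.union_subset_union hsA htB) ?_
  refine Set.pairwise_union.2 ⟨hs, ht, fun a ha b hb _ => ?_⟩
  have hab := hadj a (hsA ha) b (htB hb)
  exact ⟨hab, fun hba => hab hba.symm⟩

theorem indepNumOn_pos (h : A.Nonempty) : 0 < indepNumOn G A := by
  obtain ⟨a, ha⟩ := h
  calc 0 < ({a} : Set V).ncard := by simp
    _ ≤ indepNumOn G A :=
      ncard_le_indepNumOn (Set.singleton_subset_iff.2 ha) (Set.pairwise_singleton _ _)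

end IndepNumOn

section Linked

variable {R S T : Set V} {u v w : V}

/-- `u` and `w` are the ends of a walk of `G` whose inner vertices all lie in `R`. The walk may
have length zero, so that every vertex is linked to itself. -/
def Linked (G : SimpleGraph V) (R : Set V) (u w : V) : Prop :=
  ∃ p : G.Walk u w, ∀ x ∈ p.support, x = u ∨ x = w ∨ x ∈ R

@[refl]
theorem Linked.refl (u : V) : Linked G R u u := ⟨.nil, by simp⟩

theorem Linked.symm (h : Linked G R u w) : Linked G R w u := by
  obtain ⟨p, hp⟩ := h
  exact ⟨p.reverse, fun x hx => by grind [SimpleGraph.Walk.support_reverse]⟩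

theorem Linked.adj_trans (h : Linked G R u v) (hv : v = u ∨ v ∈ R) (hadj : G.Adj v w) :
    Linked G R u w := by
  obtain ⟨p, hp⟩ := h
  refine ⟨p.concat hadj, fun x hx => ?_⟩
  grind [SimpleGraph.Walk.support_concat]

theorem Linked.exists_isPath (h : Linked G R u w) :
    ∃ p : G.Walk u w, p.IsPath ∧ ∀ x ∈ p.support, x = u ∨ x = w ∨ x ∈ R := by
  classical
  obtain ⟨p, hp⟩ := h
  exact ⟨p.bypass, p.bypass_isPath, fun x hx => hp x (p.support_bypass_subset_support hx)⟩

-- The part `C` of `R` linked to `S` has no neighbour in the rest of `R` nor in `T`, so the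
-- induced subgraph on `R ∪ S ∪ T` splits into those on `S ∪ C` and `T ∪ (R \ C)`.
theorem indepNumOn_union_union_add [Finite V] (hST : ∀ u ∈ S, ∀ w ∈ T, ¬ Linked G R u w) :
    indepNumOn G (R ∪ S ∪ T) + indepNumOn G R = indepNumOn G (R ∪ S) + indepNumOn G (R ∪ T) := by
  let C := {r ∈ R | ∃ u ∈ S, Linked G R u r}
  have linked_of_mem : ∀ a ∈ S ∪ C, ∃ u ∈ S, Linked G R u a ∧ (a = u ∨ a ∈ R) := by
    rintro a (ha | ⟨haR, u, hu, hua⟩)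
    · exact ⟨a, ha, .refl a, .inl rfl⟩
    · exact ⟨u, hu, hua, .inr haR⟩
  have not_linked : ∀ b ∈ T ∪ R \ C, ∀ u ∈ S, ¬ Linked G R u b := by
    rintro b (hb | ⟨hbR, hbC⟩) u hu hub
    · exact hST u hu b hb hub
    · exact hbC ⟨hbR, u, hu, hub⟩
  have split : ∀ A ⊆ S ∪ C, ∀ B ⊆ T ∪ R \ C,
      indepNumOn G (A ∪ B) = indepNumOn G A + indepNumOn G B := by
    intro A hA B hB
    refine indepNumOn_union (Set.disjoint_left.2 fun a ha hb => ?_) fun a ha b hb hab => ?_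
    · obtain ⟨u, hu, hua, -⟩ := linked_of_mem a (hA ha)
      exact not_linked a (hB hb) u hu hua
    · obtain ⟨u, hu, hua, ha'⟩ := linked_of_mem a (hA ha)
      exact not_linked b (hB hb) u hu (hua.adj_trans ha' hab)
  have hR : C ∪ R \ C = R := Set.union_sdiff_cancel (Set.sep_subset _ _)
  have hRST : R ∪ S ∪ T = (S ∪ C) ∪ (T ∪ R \ C) := by grind
  have hRS : R ∪ S = (S ∪ C) ∪ R \ C := by grind
  have hRT : R ∪ T = C ∪ (T ∪ R \ C) := by grind
  have eRST := split _ subset_rfl _ subset_rfl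
  have eR := split C Set.subset_union_right (R \ C) Set.subset_union_right
  have eRS := split _ subset_rfl (R \ C) Set.subset_union_right
  have eRT := split C Set.subset_union_right _ subset_rfl
  rw [← hRST] at eRST
  rw [hR] at eR
  rw [← hRS] at eRS
  rw [← hRT] at eRT
  omega

theorem indepNumOn_add_card_le [Finite V] {ι : Type*} (I : Finset ι) (Q : ι → Set V)
    (hlinked : (I : Set ι).Pairwise fun i j => ∀ u ∈ Q i, ∀ w ∈ Q j, ¬ Linked G R u w)
    (hlt : ∀ i ∈ I, indepNumOn G R < indepNumOn G (R ∪ Q i)) :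
    indepNumOn G R + I.card ≤ indepNumOn G (R ∪ ⋃ i ∈ I, Q i) := by
  classical
  induction I using Finset.induction_on with
  | empty => simp
  | insert a I ha ih =>
    have ih := ih (hlinked.mono (by simp)) fun i hi => hlt i (Finset.mem_insert_of_mem hi)
    have hmod : indepNumOn G (R ∪ (⋃ i ∈ I, Q i) ∪ Q a) + indepNumOn G R = _ :=
      indepNumOn_union_union_add fun u hu w hw => by
        obtain ⟨i, hi, hui⟩ := Set.mem_iUnion₂.1 hu
        exact hlinked (by simp [hi]) (by simp) (ne_of_mem_of_not_mem hi ha) u hui w hw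
    have hunion : R ∪ ⋃ i ∈ insert a I, Q i = R ∪ (⋃ i ∈ I, Q i) ∪ Q a := by
      rw [Finset.set_biUnion_insert, Set.union_assoc, Set.union_comm (Q a)]
    have hlt_a := hlt a (Finset.mem_insert_self a I)
    rw [hunion, Finset.card_insert_of_notMem ha]
    omega

end Linked

section GrownTree

/-- `T` is a tree with vertex set `W`, obtained from the root `r` by attaching vertices one at a
time along edges of `G`; the remaining vertices of the ambient type are isolated in `T`. `L` is
the set of vertices to which no later vertex was attached. -/
inductive GrownTree (G : SimpleGraph V) (r : V) : SimpleGraph V → Set V → Set V → Prop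
  | single : GrownTree G r ⊥ {r} {r}
  | attach {T : SimpleGraph V} {W L : Set V} {u v : V} : GrownTree G r T W L → u ∈ W → v ∉ W →
      G.Adj u v →
      GrownTree G r (T ⊔ SimpleGraph.edge u v) (insert v W) (insert v (L \ {u}))

namespace GrownTree

variable {T : SimpleGraph V} {r u v : V} {W L : Set V}

theorem le (h : GrownTree G r T W L) : T ≤ G := by
  induction h with
  | single => exact bot_le
  | attach _ _ _ huv ih => exact sup_le ih ((SimpleGraph.edge_le_iff G).2 (.inr huv))

theorem root_mem (h : GrownTree G r T W L) : r ∈ W := by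
  induction h with
  | single => rfl
  | attach _ _ _ _ ih => exact Set.mem_insert_of_mem _ ih

theorem tips_subset (h : GrownTree G r T W L) : L ⊆ W := by
  induction h with
  | single => rfl
  | attach _ _ _ _ ih => exact Set.insert_subset_insert (Set.sdiff_subset.trans ih)

theorem mem_of_adj (h : GrownTree G r T W L) (huv : T.Adj u v) : u ∈ W := by
  induction h generalizing u v with
  | single => simp at huv
  | attach _ hu _ _ ih => grind

theorem isAcyclic (h : GrownTree G r T W L) : T.IsAcyclic := by
  induction h with
  | single => exact SimpleGraph.isAcyclic_bot
  | @attach T W L u v hT hu hv _ ih =>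
    refine ih.sup_edge_of_not_reachable fun huv => ?_
    obtain ⟨p⟩ := huv
    obtain ⟨d, -, -, hd⟩ := p.exists_boundary_dart W hu hv
    exact hd (hT.mem_of_adj d.adj.symm)

theorem reachable (h : GrownTree G r T W L) (hv : v ∈ W) : T.Reachable r v := by
  induction h generalizing v with
  | single => rw [Set.mem_singleton_iff.1 hv]
  | @attach T W _ u x _ hu hx hux ih =>
    have hle : T ≤ T ⊔ SimpleGraph.edge u x := le_sup_left
    rcases hv with rfl | hv
    · have hadj : (T ⊔ SimpleGraph.edge u v).Adj u v := by simp [SimpleGraph.edge_adj, hux.ne]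
      exact ((ih hu).mono hle).trans hadj.reachable
    · exact (ih hv).mono hle

theorem exists_ne_adj_adj (h : GrownTree G r T W L) (hv : v ∈ W) (hvL : v ∉ L) (hvr : v ≠ r) :
    ∃ a b, a ≠ b ∧ T.Adj v a ∧ T.Adj v b := by
  induction h with
  | single => exact absurd hv hvL
  | @attach T W L u x hT hu hx hux ih =>
    have hle : T ≤ T ⊔ SimpleGraph.edge u x := le_sup_left
    have hvx : v ≠ x := fun hvx => hvL (.inl hvx)
    have hvW : v ∈ W := hv.resolve_left hvx
    by_cases hvu : v = u
    · subst hvu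
      obtain ⟨a, ha⟩ := (hT.reachable hvW).nonempty_neighborSet_right hvr.symm
      have hax : a ≠ x := fun hax => hx (hax ▸ hT.mem_of_adj ha.symm)
      exact ⟨a, x, hax, hle ha, by simp [SimpleGraph.edge_adj, hvx]⟩
    · obtain ⟨a, b, hab, ha, hb⟩ := ih hvW (fun h => hvL (.inr ⟨h, hvu⟩))
      exact ⟨a, b, hab, hle ha, hle hb⟩

theorem isTree (h : GrownTree G r T Set.univ L) : T.IsTree where
  connected := (SimpleGraph.connected_iff_exists_forall_reachable _).2
    ⟨r, fun _ => h.reachable (Set.mem_univ _)⟩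
  isAcyclic := h.isAcyclic

theorem ncard_leaves_le [Finite V] (h : GrownTree G r T Set.univ L) :
    {v : V | (T.neighborSet v).ncard = 1}.ncard ≤ L.ncard + 1 := by
  have hleaves : {v : V | (T.neighborSet v).ncard = 1} ⊆ insert r L := by
    intro v hv
    by_contra hvrL
    obtain ⟨hvr, hvL⟩ := not_or.1 hvrL
    obtain ⟨a, b, hab, ha, hb⟩ := h.exists_ne_adj_adj (Set.mem_univ v) hvL hvr
    obtain ⟨c, hc⟩ := Set.ncard_eq_one.1 hv
    have eq_c : ∀ x, T.Adj v x → x = c := fun x hx => (Set.ext_iff.1 hc x).1 hx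
    exact hab ((eq_c a ha).trans (eq_c b hb).symm)
  exact (Set.ncard_le_ncard hleaves).trans (Set.ncard_insert_le r L)

theorem exists_forall_adj_mem [Finite V] {T : SimpleGraph V} {W L : Set V} {q : V}
    (h : GrownTree G r T W L) (hq : q ∈ L) :
    ∃ T' W' L' q', GrownTree G r T' W' L' ∧ W ⊆ W' ∧ L'.ncard ≤ L.ncard ∧
      q' ∈ W' ∧ (q' = q ∨ q' ∉ W) ∧ ∀ z, G.Adj q' z → z ∈ W' := by
  by_cases hz : ∀ z, G.Adj q z → z ∈ W
  · exact ⟨T, W, L, q, h, subset_rfl, le_rfl, h.tips_subset hq, .inl rfl, hz⟩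
  push Not at hz
  obtain ⟨z, hqz, hzW⟩ := hz
  have : (insert z W)ᶜ.ncard < Wᶜ.ncard :=
    Set.ncard_lt_ncard (compl_lt_compl_iff_lt.2 (Set.ssubset_insert hzW))
  obtain ⟨T', W', L', q', h', hWW', hLL', hq'W', hq', hadj⟩ :=
    (h.attach (h.tips_subset hq) hzW hqz).exists_forall_adj_mem (Set.mem_insert z _)
  refine ⟨T', W', L', q', h', (Set.subset_insert z W).trans hWW',
    hLL'.trans ?_, hq'W', .inr ?_, hadj⟩
  · have := Set.ncard_sdiff_singleton_add_one hq
    have := Set.ncard_insert_le z (L \ {q})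
    omega
  · rcases hq' with rfl | hq'
    · exact hzW
    · exact fun hW => hq' (Set.mem_insert_of_mem z hW)
termination_by Wᶜ.ncard

-- A new branch is prolonged until its tip has no neighbour outside the tree. That tip can be added
-- to any independent set of the remaining vertices, so the new branch is paid for by a drop of the
-- independence number there.
theorem exists_spanning [Finite V] {T : SimpleGraph V} {W L : Set V} (hG : G.Connected)
    (h : GrownTree G r T W L) :
    ∃ T' L', GrownTree G r T' Set.univ L' ∧ L'.ncard ≤ L.ncard + indepNumOn G Wᶜ := by
  by_cases hW : W = Set.univ
  · subst hW
    exact ⟨T, L, h, by simp⟩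
  obtain ⟨x, hx⟩ := (Set.ne_univ_iff_exists_notMem W).1 hW
  obtain ⟨p⟩ := hG.preconnected r x
  obtain ⟨⟨⟨u, z⟩, huz⟩, -, hu, hz⟩ := p.exists_boundary_dart W h.root_mem hx
  obtain ⟨T', W', L', q, h', hWW', hLL', hqW', hq, hadj⟩ :=
    (h.attach hu hz huz).exists_forall_adj_mem (Set.mem_insert z _)
  have hqW : q ∉ W := by
    rcases hq with rfl | hq
    · exact hz
    · exact fun hqW => hq (Set.mem_insert_of_mem z hqW)
  have : W'ᶜ.ncard < Wᶜ.ncard := Set.ncard_lt_ncard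
    (compl_lt_compl_iff_lt.2 ((Set.ssubset_insert hz).trans_subset hWW'))
  have hdrop : indepNumOn G W'ᶜ + 1 ≤ indepNumOn G Wᶜ := calc
    indepNumOn G W'ᶜ + 1 ≤ indepNumOn G W'ᶜ + indepNumOn G {q} :=
      Nat.add_le_add_left (indepNumOn_pos (Set.singleton_nonempty q)) _
    _ = indepNumOn G (W'ᶜ ∪ {q}) := (indepNumOn_union (by simpa) (by
        rintro a ha _ rfl haq
        exact ha (hadj a haq.symm))).symm
    _ ≤ indepNumOn G Wᶜ := indepNumOn_mono (by grind)
  have hL'L : L'.ncard ≤ L.ncard + 1 := hLL'.trans ((Set.ncard_insert_le _ _).trans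
    (Nat.add_le_add_right (Set.ncard_le_ncard Set.sdiff_subset) 1))
  obtain ⟨T'', L'', h'', hL''⟩ := h'.exists_spanning hG
  exact ⟨T'', L'', h'', by omega⟩
termination_by Wᶜ.ncard

end GrownTree

end GrownTree

section Paths

/-- The vertices of `l`, in this order, form a path of `G`. The empty list is allowed. -/
structure IsPathList (G : SimpleGraph V) (l : List V) : Prop where
  isChain : l.IsChain G.Adj
  nodup : l.Nodup

theorem IsPathList.exists_grownTree {a : V} {l : List V} (h : IsPathList G (a :: l)) :
    ∃ r T, GrownTree G r T {v | v ∈ a :: l} {a} := by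
  induction l generalizing a with
  | nil => exact ⟨a, ⊥, by simpa using GrownTree.single (G := G)⟩
  | cons b l ih =>
    obtain ⟨hab, hchain⟩ := List.isChain_cons_cons.1 h.isChain
    obtain ⟨ha, hnodup⟩ := List.nodup_cons.1 h.nodup
    obtain ⟨r, T, hT⟩ := ih ⟨hchain, hnodup⟩
    refine ⟨r, T ⊔ SimpleGraph.edge b a, ?_⟩
    convert hT.attach List.mem_cons_self ha hab.symm using 1
    · ext v
      simp
    · simp

theorem IsPathList.exists_isTree_ncard_leaves_le [Finite V] {l : List V} (h : IsPathList G l)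
    (hG : G.Connected) :
    ∃ T ≤ G, T.IsTree ∧
      {v : V | (T.neighborSet v).ncard = 1}.ncard ≤ indepNumOn G {v | v ∉ l} + 2 := by
  obtain ⟨r, a, T, W, hT, hlW⟩ : ∃ r a T W, GrownTree G r T W {a} ∧ {v | v ∈ l} ⊆ W := by
    cases l with
    | nil =>
      obtain ⟨r⟩ := hG.nonempty
      exact ⟨r, r, ⊥, {r}, .single, by simp⟩
    | cons a l =>
      obtain ⟨r, T, hT⟩ := h.exists_grownTree
      exact ⟨r, a, T, _, hT, subset_rfl⟩
  obtain ⟨T', L', hT', hL'⟩ := hT.exists_spanning hG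
  refine ⟨T', hT'.le, hT'.isTree, ?_⟩
  calc {v : V | (T'.neighborSet v).ncard = 1}.ncard ≤ L'.ncard + 1 := hT'.ncard_leaves_le
    _ ≤ indepNumOn G Wᶜ + 2 := by
      rw [Set.ncard_singleton] at hL'
      omega
    _ ≤ indepNumOn G {v | v ∉ l} + 2 :=
      Nat.add_le_add_right (indepNumOn_mono (Set.compl_subset_compl.2 hlW)) 2

end Paths

section PathSurgery

variable {a b u w y : V} {A B D E M U W l : List V}

theorem isPathList_append : IsPathList G (A ++ B) ↔ IsPathList G A ∧ IsPathList G B ∧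
    A.Disjoint B ∧ ∀ x ∈ A.getLast?, ∀ y ∈ B.head?, G.Adj x y where
  mp h :=
    have ⟨hA, hB, hAB⟩ := List.isChain_append.1 h.isChain
    have ⟨hA', hB', hdisj⟩ := List.nodup_append'.1 h.nodup
    ⟨⟨hA, hA'⟩, ⟨hB, hB'⟩, hdisj, hAB⟩
  mpr := fun ⟨hA, hB, hdisj, hAB⟩ =>
    ⟨hA.isChain.append hB.isChain hAB, hA.nodup.append hB.nodup hdisj⟩

theorem IsPathList.reverse (h : IsPathList G l) : IsPathList G l.reverse where
  isChain := List.isChain_reverse.2 (h.isChain.imp fun _ _ h => h.symm)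
  nodup := List.nodup_reverse.2 h.nodup

theorem IsPathList.infix (h : IsPathList G l) {l' : List V} (hl' : l' <:+: l) :
    IsPathList G l' where
  isChain := h.isChain.infix hl'
  nodup := h.nodup.sublist hl'.sublist

theorem isPathList_support {q : G.Walk a b} (hq : q.IsPath) : IsPathList G q.support where
  isChain := q.isChain_adj_support
  nodup := hq.support_nodup

theorem head?_support (q : G.Walk a b) : q.support.head? = some a := by
  rw [List.head?_eq_some_head q.support_ne_nil, q.head_support]

theorem getLast?_support (q : G.Walk a b) : q.support.getLast? = some b := by
  rw [List.getLast?_eq_some_getLast q.support_ne_nil, q.getLast_support]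

theorem IsPathList.replace_infix (h : IsPathList G (A ++ M ++ B)) {q : G.Walk a b}
    (hq : q.IsPath) (hql : ∀ x ∈ q.support, x ∉ A ++ M ++ B) (ha : ∀ x ∈ A.getLast?, G.Adj x a)
    (hb : ∀ x ∈ B.head?, G.Adj b x) : IsPathList G (A ++ q.support ++ B) := by
  obtain ⟨hAM, hB, hdisj, -⟩ := isPathList_append.1 h
  have hA := (isPathList_append.1 hAM).1
  have hAq : IsPathList G (A ++ q.support) := isPathList_append.2
    ⟨hA, isPathList_support hq, by grind [List.Disjoint], by simpa [head?_support] using ha⟩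
  exact isPathList_append.2 ⟨hAq, hB, by grind [List.Disjoint], by simpa [getLast?_support]⟩

theorem IsPathList.rotate (h : IsPathList G (A ++ U ++ u :: D ++ y :: W ++ w :: E))
    {q : G.Walk a b} (hq : q.IsPath)
    (hql : ∀ x ∈ q.support, x ∉ A ++ U ++ u :: D ++ y :: W ++ w :: E)
    (ha : ∀ x ∈ A.getLast?, G.Adj x a) (hb : G.Adj b y) {p : G.Walk u w} (hp : p.IsPath)
    (hpl : ∀ x ∈ p.support, x = u ∨ x = w ∨
      x ∉ A ++ U ++ u :: D ++ y :: W ++ w :: E ∧ x ∉ q.support) :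
    IsPathList G (A ++ q.support ++ y :: D.reverse ++ p.support ++ E) := by
  have hA : IsPathList G A := h.infix ⟨[], U ++ u :: D ++ y :: W ++ w :: E, by simp⟩
  have hyDu : IsPathList G (y :: D.reverse ++ [u]) := by
    simpa using (h.infix (l' := u :: D ++ [y]) ⟨A ++ U, W ++ w :: E, by simp⟩).reverse
  have hwE : IsPathList G ([w] ++ E) := h.infix ⟨A ++ U ++ u :: D ++ y :: W, [], by simp⟩
  obtain ⟨hyD, -, -, hDu⟩ := isPathList_append.1 hyDu
  obtain ⟨-, hE, -, hwE⟩ := isPathList_append.1 hwE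
  have hnodup := h.nodup
  simp only [List.nodup_append', List.disjoint_left, List.mem_append, List.mem_cons]
    at hnodup hql hpl
  have hAq : IsPathList G (A ++ q.support) := isPathList_append.2
    ⟨hA, isPathList_support hq, by grind [List.Disjoint], by simpa [head?_support] using ha⟩
  have hAqyD : IsPathList G (A ++ q.support ++ y :: D.reverse) := isPathList_append.2
    ⟨hAq, hyD, by grind [List.Disjoint], by simpa [getLast?_support]⟩
  have hAqyDp : IsPathList G (A ++ q.support ++ y :: D.reverse ++ p.support) :=
    isPathList_append.2 ⟨hAqyD, isPathList_support hp, by grind [List.Disjoint],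
      by simpa [head?_support] using hDu⟩
  refine isPathList_append.2 ⟨hAqyDp, hE, by grind [List.Disjoint], ?_⟩
  rw [List.getLast?_append_of_ne_nil _ p.support_ne_nil, getLast?_support]
  exact hwE

end PathSurgery

section Optimal

variable {l l' : List V} {H : Set V}

/-- `v` has a neighbour in `H`. -/
def Attached (G : SimpleGraph V) (H : Set V) (v : V) : Prop := ∃ h ∈ H, G.Adj h v

/-- The vertices lying neither on the path `l` nor in `H`. -/
def outside (l : List V) (H : Set V) : Set V := {v | v ∉ l ∧ v ∉ H}

/-- `H` is the vertex set of a nonempty union of connected components of `G - l`. -/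
structure IsComponentUnion (G : SimpleGraph V) (l : List V) (H : Set V) : Prop where
  nonempty : H.Nonempty
  notMem : ∀ h ∈ H, h ∉ l
  mem_or_mem : ∀ h ∈ H, ∀ v, G.Adj h v → v ∈ H ∨ v ∈ l

theorem IsComponentUnion.indepNumOn_union [Finite V] (hH : IsComponentUnion G l H) {Q : Set V}
    (hQ : ∀ v ∈ Q, v ∈ l ∧ ¬ Attached G H v) :
    indepNumOn G (outside l H ∪ Q ∪ H) = indepNumOn G (outside l H ∪ Q) + indepNumOn G H := by
  refine WinTheorem.indepNumOn_union (Set.disjoint_left.2 ?_) ?_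
  · rintro v (hv | hv) hvH
    · exact hv.2 hvH
    · exact hH.notMem v hvH (hQ v hv).1
  · rintro v (hv | hv) h hh hvh
    · exact (hH.mem_or_mem h hh v hvh.symm).elim hv.2 hv.1
    · exact (hQ v hv).2 ⟨h, hh, hvh.symm⟩

theorem IsComponentUnion.indepNumOn_compl [Finite V] (hH : IsComponentUnion G l H) :
    indepNumOn G {v | v ∉ l} = indepNumOn G (outside l H) + indepNumOn G H := by
  have hcompl : {v | v ∉ l} = outside l H ∪ ∅ ∪ H := by
    ext v
    have := hH.notMem v
    simp only [outside, Set.mem_union, Set.mem_ofPred_eq, Set.mem_empty_iff_false]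
    tauto
  rw [hcompl, hH.indepNumOn_union (by simp), Set.union_empty]

theorem IsComponentUnion.exists_mem_forall_adj (hH : IsComponentUnion G l H) {o : Option V}
    (ho : ∀ x ∈ o, Attached G H x) : ∃ a ∈ H, ∀ x ∈ o, G.Adj a x := by
  cases o with
  | none =>
    obtain ⟨a, ha⟩ := hH.nonempty
    exact ⟨a, ha, by simp⟩
  | some x =>
    obtain ⟨a, ha, hax⟩ := ho x rfl
    exact ⟨a, ha, by simpa using hax⟩

/-- The path `l` and the union `H` of components of `G - l` are an optimal pair: among all paths,
`l` minimizes the independence number of the remaining graph, and among all pairs whose path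
attains this minimum, `H` has the fewest vertices. -/
structure IsOptimal (G : SimpleGraph V) (l : List V) (H : Set V) : Prop
    extends IsPathList G l, IsComponentUnion G l H where
  min_indepNumOn : ∀ l', IsPathList G l' →
    indepNumOn G {v | v ∉ l} ≤ indepNumOn G {v | v ∉ l'}
  min_ncard : ∀ l' H', IsPathList G l' → IsComponentUnion G l' H' →
    indepNumOn G {v | v ∉ l'} ≤ indepNumOn G {v | v ∉ l} → H.ncard ≤ H'.ncard

theorem exists_isOptimal (hl : ∀ l, IsPathList G l → ∃ v, v ∉ l) : ∃ l H, IsOptimal G l H := by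
  obtain ⟨l₀, hl₀, hmin⟩ := exists_minimalFor_of_wellFoundedLT (IsPathList G)
    (fun l => indepNumOn G {v | v ∉ l}) ⟨[], .nil, .nil⟩
  have hmin₀ : ∀ l, IsPathList G l → indepNumOn G {v | v ∉ l₀} ≤ indepNumOn G {v | v ∉ l} :=
    fun l hl => (le_total _ _).elim id (hmin hl)
  have hunion₀ : IsComponentUnion G l₀ {v | v ∉ l₀} :=
    ⟨hl l₀ hl₀, fun _ => id, fun _ _ v _ => (em (v ∈ l₀)).symm⟩
  obtain ⟨⟨l, H⟩, ⟨hl, hunion, hle⟩, hminH⟩ := exists_minimalFor_of_wellFoundedLT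
    (fun p : List V × Set V => IsPathList G p.1 ∧ IsComponentUnion G p.1 p.2 ∧
      indepNumOn G {v | v ∉ p.1} ≤ indepNumOn G {v | v ∉ l₀})
    (fun p => p.2.ncard) ⟨(l₀, {v | v ∉ l₀}), hl₀, hunion₀, le_rfl⟩
  exact ⟨l, H, ⟨hl, hunion, fun l' hl' => hle.trans (hmin₀ l' hl'), fun l' H' hl' hH' hle' =>
    (le_total _ _).elim id (hminH (j := (l', H')) ⟨hl', hH', hle'.trans hle⟩)⟩⟩

namespace IsOptimal

variable [Finite V]

theorem indepNumOn_outside_lt (h : IsOptimal G l H) (hl' : IsPathList G l')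
    (hmeet : ∃ z ∈ l', z ∈ H) (hdrop : ∀ v ∈ l, v ∉ l' → ¬ Attached G H v) :
    indepNumOn G (outside l H) < indepNumOn G (outside l H ∪ {v | v ∈ l ∧ v ∉ l'}) := by
  by_contra! hle
  have hcompl : indepNumOn G {v | v ∉ l'} ≤
      indepNumOn G (outside l H) + indepNumOn G (H \ {v | v ∈ l'}) := calc
    _ ≤ indepNumOn G (outside l H ∪ {v | v ∈ l ∧ v ∉ l'} ∪ H \ {v | v ∈ l'}) := by
      refine indepNumOn_mono fun v hv => ?_
      simp only [outside, Set.mem_union, Set.mem_sdiff, Set.mem_ofPred_eq] at hv ⊢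
      tauto
    _ ≤ _ := (indepNumOn_union_le _ _).trans (Nat.add_le_add_right hle _)
  have hsum := h.indepNumOn_compl
  rcases (H \ {v | v ∈ l'}).eq_empty_or_nonempty with hempty | hne
  · rw [hempty, indepNumOn_empty] at hcompl
    have := h.min_indepNumOn l' hl'
    have := indepNumOn_pos (G := G) h.nonempty
    omega
  · obtain ⟨z, hzl', hzH⟩ := hmeet
    have hlt : (H \ {v | v ∈ l'}).ncard < H.ncard :=
      Set.ncard_lt_ncard ⟨Set.sdiff_subset, fun hsub => (hsub hzH).2 hzl'⟩
    have hmono : indepNumOn G (H \ {v | v ∈ l'}) ≤ indepNumOn G H :=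
      indepNumOn_mono Set.sdiff_subset
    refine hlt.not_ge (h.min_ncard l' _ hl' ⟨hne, fun _ => And.right, ?_⟩ (by omega))
    intro x hx v hxv
    by_cases hv : v ∈ l'
    · exact .inr hv
    · exact .inl ⟨(h.mem_or_mem x hx.1 v hxv).resolve_right
        fun hvl => hdrop v hvl hv ⟨x, hx.1, hxv⟩, hv⟩

theorem linked (h : IsOptimal G l H) {a b : V} (ha : a ∈ H) (hb : b ∈ H) : Linked G H a b := by
  let C := {v ∈ H | Linked G H a v}
  have hCH : C ⊆ H := Set.sep_subset _ _
  have hC : IsComponentUnion G l C :=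
    ⟨⟨a, ha, .refl a⟩, fun v hv => h.notMem v hv.1, fun v hv x hvx =>
      (h.mem_or_mem v hv.1 x hvx).imp_left fun hx => ⟨hx, hv.2.adj_trans (.inr hv.1) hvx⟩⟩
  have hCeq : C = H :=
    Set.eq_of_subset_of_ncard_le hCH (h.min_ncard l C h.toIsPathList hC le_rfl)
  exact (hCeq ▸ hb : b ∈ C).2

theorem exists_isPath_adj_adj (h : IsOptimal G l H) {o₁ o₂ : Option V}
    (h₁ : ∀ x ∈ o₁, Attached G H x) (h₂ : ∀ x ∈ o₂, Attached G H x) :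
    ∃ (a b : V) (q : G.Walk a b), q.IsPath ∧ (∀ x ∈ q.support, x ∈ H) ∧
      (∀ x ∈ o₁, G.Adj x a) ∧ ∀ x ∈ o₂, G.Adj b x := by
  obtain ⟨a, ha, ha₁⟩ := h.exists_mem_forall_adj h₁
  obtain ⟨b, hb, hb₂⟩ := h.exists_mem_forall_adj h₂
  obtain ⟨q, hq, hqH⟩ := (h.linked ha hb).exists_isPath
  refine ⟨a, b, q, hq, fun x hx => ?_, fun x hx => (ha₁ x hx).symm, hb₂⟩
  rcases hqH x hx with rfl | rfl | hx
  exacts [ha, hb, hx]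

end IsOptimal

end Optimal

section Segments

variable {l A A₁ A₂ S₁ S₂ : List V} {H : Set V}

/-- `S` is a stretch of the path `l` right after the initial part `A`, whose last vertex (if any)
is attached to `H`. No vertex of `S` is attached to `H`, and `S` is minimal such that adding it to
the vertices outside `l` and `H` increases the independence number. -/
structure IsSegment (G : SimpleGraph V) (l : List V) (H : Set V) (A S : List V) : Prop where
  isPrefix : A ++ S <+: l
  attached : ∀ x ∈ A.getLast?, Attached G H x
  not_attached : ∀ v ∈ S, ¬ Attached G H v
  lt : indepNumOn G (outside l H) < indepNumOn G (outside l H ∪ {v | v ∈ S})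
  le_of_prefix : ∀ U, U <+: S → U ≠ S →
    indepNumOn G (outside l H ∪ {v | v ∈ U}) ≤ indepNumOn G (outside l H)

theorem exists_append_forall_not_head? {α : Type*} (p : α → Prop) (T : List α) :
    ∃ T₁ T₂, T = T₁ ++ T₂ ∧ (∀ x ∈ T₁, ¬ p x) ∧ ∀ x ∈ T₂.head?, p x := by
  classical
  refine ⟨T.takeWhile (¬ p ·), T.dropWhile (¬ p ·), List.takeWhile_append_dropWhile.symm,
    fun x hx => by simpa using List.mem_takeWhile_imp hx, fun x hx => ?_⟩
  have := List.head?_dropWhile_not (¬ p ·) T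
  rw [Option.mem_def.1 hx] at this
  simpa using this

theorem IsOptimal.exists_isSegment [Finite V] (h : IsOptimal G l H) (hA : A <+: l)
    (hatt : ∀ x ∈ A.getLast?, Attached G H x) : ∃ S, IsSegment G l H A S := by
  obtain ⟨T, rfl⟩ := hA
  obtain ⟨T₁, T₂, rfl, hT₁, hT₂⟩ := exists_append_forall_not_head? (Attached G H) T
  have hlt : indepNumOn G (outside (A ++ (T₁ ++ T₂)) H) <
      indepNumOn G (outside (A ++ (T₁ ++ T₂)) H ∪ {v | v ∈ T₁}) := by
    obtain ⟨a, b, q, hq, hqH, ha, hb⟩ := h.exists_isPath_adj_adj hatt hT₂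
    have hpath : IsPathList G (A ++ q.support ++ T₂) :=
      IsPathList.replace_infix (M := T₁) (by simpa using h.toIsPathList) hq
        (fun x hx => by simpa using h.notMem x (hqH x hx)) ha hb
    have hdrop : ∀ v ∈ A ++ (T₁ ++ T₂), v ∉ A ++ q.support ++ T₂ → v ∈ T₁ := by grind
    refine (h.indepNumOn_outside_lt hpath ⟨a, by simp, hqH a q.start_mem_support⟩
      fun v hv hv' => hT₁ v (hdrop v hv hv')).trans_le (indepNumOn_mono ?_)
    exact Set.union_subset_union_right _ fun v hv => hdrop v hv.1 hv.2
  obtain ⟨S, ⟨hST, hS⟩, hmin⟩ := exists_minimalFor_of_wellFoundedLT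
    (fun S => S <+: T₁ ∧ indepNumOn G (outside (A ++ (T₁ ++ T₂)) H) <
      indepNumOn G (outside (A ++ (T₁ ++ T₂)) H ∪ {v | v ∈ S})) List.length
    ⟨T₁, List.prefix_rfl, hlt⟩
  refine ⟨S, ?_, hatt, fun v hv => hT₁ v (hST.subset hv), hS, fun U hU hne => ?_⟩
  · exact (List.prefix_append_right_inj A).2 (hST.trans (List.prefix_append T₁ T₂))
  · by_contra! hlt
    exact hne (hU.eq_of_length_le (hmin ⟨hU.trans hST, hlt⟩ hU.length_le))

-- The path `l` is rerouted as `A`, a path through `H`, the reversed stretch from `y` back to `u`, a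
-- path through `outside l H`, and `w :: E`. This loses only the vertices of `U` and `W`.
theorem IsOptimal.indepNumOn_outside_lt_of_linked [Finite V] {D E U W : List V} {u w y : V}
    (h : IsOptimal G l H) (hl : l = A ++ U ++ u :: D ++ y :: W ++ w :: E)
    (hA : ∀ x ∈ A.getLast?, Attached G H x) (hy : Attached G H y)
    (hU : ∀ v ∈ U, ¬ Attached G H v) (hW : ∀ v ∈ W, ¬ Attached G H v)
    (hlinked : Linked G (outside l H) u w) :
    indepNumOn G (outside l H) < indepNumOn G (outside l H ∪ {v | v ∈ U} ∪ {v | v ∈ W}) := by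
  obtain ⟨a, b, q, hq, hqH, ha, hb⟩ := h.exists_isPath_adj_adj (o₂ := some y) hA (by simpa)
  obtain ⟨p, hp, hpout⟩ := hlinked.exists_isPath
  have hpath : IsPathList G (A ++ q.support ++ y :: D.reverse ++ p.support ++ E) := by
    refine IsPathList.rotate (U := U) (W := W) (hl ▸ h.toIsPathList) hq
      (fun x hx => hl ▸ h.notMem x (hqH x hx)) ha (hb y rfl) hp fun x hx => ?_
    exact (hpout x hx).imp_right (.imp_right fun hx => hl ▸ ⟨hx.1, fun hxq => hx.2 (hqH x hxq)⟩)
  have hdrop : ∀ v ∈ l, v ∉ A ++ q.support ++ y :: D.reverse ++ p.support ++ E →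
      v ∈ U ∨ v ∈ W := by
    have hup := p.start_mem_support
    have hwp := p.end_mem_support
    grind
  refine (h.indepNumOn_outside_lt hpath ⟨a, by simp, hqH a q.start_mem_support⟩
    fun v hv hv' => (hdrop v hv hv').elim (hU v) (hW v)).trans_le (indepNumOn_mono ?_)
  rw [Set.union_assoc]
  exact Set.union_subset_union_right _ fun v hv => hdrop v hv.1 hv.2

theorem IsOptimal.not_linked_of_append [Finite V] {M : List V} {y : V} (h : IsOptimal G l H)
    (h₁ : IsSegment G l H A S₁) (h₂ : IsSegment G l H (A ++ S₁ ++ M ++ [y]) S₂) :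
    ∀ u ∈ S₁, ∀ w ∈ S₂, ¬ Linked G (outside l H) u w := by
  have hy := h₂.attached y List.getLast?_concat
  obtain ⟨U, T, rfl, hU, hT⟩ := exists_append_forall_not_head?
    (fun u => ∃ w ∈ S₂, Linked G (outside l H) u w) S₁
  push Not at hU
  rcases T with _ | ⟨u, T⟩
  · simpa using hU
  exfalso
  obtain ⟨w, hw, hlinked⟩ := hT u rfl
  obtain ⟨W, E, rfl⟩ := List.append_of_mem hw
  obtain ⟨B, hl⟩ := h₂.isPrefix
  have hl : l = A ++ U ++ u :: (T ++ M) ++ y :: W ++ w :: (E ++ B) := by simp [← hl]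
  have hlt := h.indepNumOn_outside_lt_of_linked hl h₁.attached hy
    (fun v hv => h₁.not_attached v (by simp [hv])) (fun v hv => h₂.not_attached v (by simp [hv]))
    hlinked
  have hmod := indepNumOn_union_union_add (R := outside l H) (S := {v | v ∈ U}) (T := {v | v ∈ W})
    fun v hv x hx => hU v hv x (List.mem_append_left _ hx)
  have hleU := h₁.le_of_prefix U (List.prefix_append _ _) (by simp)
  have hleW := h₂.le_of_prefix W (List.prefix_append _ _) (by simp)
  omega

theorem IsOptimal.not_linked [Finite V] (h : IsOptimal G l H) (h₁ : IsSegment G l H A₁ S₁)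
    (h₂ : IsSegment G l H A₂ S₂) (hA : A₁ <+: A₂) (hne : A₁ ≠ A₂) :
    ∀ u ∈ S₁, ∀ w ∈ S₂, ¬ Linked G (outside l H) u w := by
  obtain ⟨C, y, rfl⟩ : ∃ C y, A₂ = C ++ [y] :=
    (List.eq_nil_or_concat' A₂).resolve_left fun hnil => hne (by simp_all)
  have hA₁C : A₁ <+: C := (List.prefix_concat_iff.1 hA).resolve_left hne
  have hyS₁ : ¬ C ++ [y] <+: A₁ ++ S₁ := by
    obtain ⟨D, rfl⟩ := hA₁C
    rw [List.append_assoc, List.prefix_append_right_inj]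
    exact fun hDy => h₁.not_attached y (hDy.subset (by simp)) (h₂.attached y List.getLast?_concat)
  have hS₁C : A₁ ++ S₁ <+: C := by
    have := List.prefix_or_prefix_of_prefix h₁.isPrefix ((List.prefix_append _ _).trans h₂.isPrefix)
    exact (List.prefix_concat_iff.1 (this.resolve_right hyS₁)).resolve_left
      fun heq => hyS₁ (heq ▸ List.prefix_rfl)
  obtain ⟨M, rfl⟩ := hS₁C
  exact h.not_linked_of_append h₁ h₂

end Segments

section Bound

variable {l : List V} {H : Set V}

theorem IsOptimal.not_connected [Finite V] (h : IsOptimal G l H) :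
    ¬ (G.induce {v | v ∈ l ∧ Attached G H v}ᶜ).Connected := by
  intro hconn
  obtain ⟨S, hS⟩ := h.exists_isSegment List.nil_prefix (by simp)
  have hne : S ≠ [] := by
    rintro rfl
    simpa using hS.lt
  obtain ⟨s, hs⟩ := List.exists_mem_of_ne_nil S hne
  have hsl : s ∈ l := hS.isPrefix.subset (by simpa)
  obtain ⟨a, ha⟩ := h.nonempty
  obtain ⟨p⟩ := hconn.preconnected ⟨a, fun hal => h.notMem a ha hal.1⟩
    ⟨s, fun hs' => hS.not_attached s hs hs'.2⟩
  obtain ⟨⟨⟨x, y⟩, hxy⟩, -, hx, hy⟩ :=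
    p.exists_boundary_dart {v | (v : V) ∈ H} ha fun hsH => h.notMem s hsH hsl
  exact y.2 ⟨(h.mem_or_mem x hx y hxy).resolve_left hy, x, hx, hxy⟩

theorem ncard_setOf_mem_add_one_le {α : Type*} [DecidableEq α] (l : List α) (p : α → Prop)
    [DecidablePred p] : {x | x ∈ l ∧ p x}.ncard + 1 ≤
      {A ∈ l.inits.toFinset | ∀ x ∈ A.getLast?, p x}.card := by
  let X := {x ∈ l.toFinset | p x}
  have hX : {x | x ∈ l ∧ p x} = X := by ext; simp [X]
  have hsub : X.insertNone ⊆
      {A ∈ l.inits.toFinset | ∀ x ∈ A.getLast?, p x}.image List.getLast? := by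
    rintro (_ | x) hx
    · exact Finset.mem_image.2 ⟨[], by simp, rfl⟩
    · obtain ⟨hxl, hpx⟩ : x ∈ l ∧ p x := by simpa [X] using hx
      obtain ⟨A, B, rfl⟩ := List.append_of_mem hxl
      exact Finset.mem_image.2 ⟨A ++ [x], by simpa, List.getLast?_concat⟩
  rw [hX, Set.ncard_coe_finset, ← Finset.card_insertNone]
  exact (Finset.card_le_card hsub).trans Finset.card_image_le

theorem IsOptimal.indepNumOn_compl_add_lt [Finite V] (h : IsOptimal G l H) :
    indepNumOn G {v | v ∉ l} + {v | v ∈ l ∧ Attached G H v}.ncard < indepNumOn G Set.univ := by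
  classical
  let I := {A ∈ l.inits.toFinset | ∀ x ∈ A.getLast?, Attached G H x}
  have hseg : ∀ A ∈ I, ∃ S, IsSegment G l H A S := fun A hA =>
    h.exists_isSegment (by simp_all [I]) (by simp_all [I])
  choose! S hS using hseg
  have hlinked : (I : Set (List V)).Pairwise fun A B =>
      ∀ u ∈ {v | v ∈ S A}, ∀ w ∈ {v | v ∈ S B}, ¬ Linked G (outside l H) u w := by
    intro A hA B hB hne
    have hAl := (List.prefix_append _ _).trans (hS A hA).isPrefix
    have hBl := (List.prefix_append _ _).trans (hS B hB).isPrefix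
    rcases List.prefix_or_prefix_of_prefix hAl hBl with hAB | hBA
    · exact h.not_linked (hS A hA) (hS B hB) hAB hne
    · exact fun u hu w hw huw => h.not_linked (hS B hB) (hS A hA) hBA hne.symm w hw u hu huw.symm
  have hsegments : ∀ v ∈ ⋃ A ∈ I, {v | v ∈ S A}, v ∈ l ∧ ¬ Attached G H v := by
    intro v hv
    obtain ⟨A, hA, hvA⟩ := Set.mem_iUnion₂.1 hv
    exact ⟨(hS A hA).isPrefix.subset (List.mem_append_right _ hvA), (hS A hA).not_attached v hvA⟩
  have hcard : {v | v ∈ l ∧ Attached G H v}.ncard + 1 ≤ I.card :=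
    ncard_setOf_mem_add_one_le l (Attached G H)
  have hadd := indepNumOn_add_card_le I (fun A => {v | v ∈ S A}) hlinked fun A hA => (hS A hA).lt
  calc indepNumOn G {v | v ∉ l} + {v | v ∈ l ∧ Attached G H v}.ncard
      < indepNumOn G (outside l H) + I.card + indepNumOn G H := by
        rw [h.indepNumOn_compl]
        omega
    _ ≤ indepNumOn G (outside l H ∪ ⋃ A ∈ I, {v | v ∈ S A}) + indepNumOn G H :=
        Nat.add_le_add_right hadd _
    _ = indepNumOn G (outside l H ∪ (⋃ A ∈ I, {v | v ∈ S A}) ∪ H) :=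
        (h.indepNumOn_union hsegments).symm
    _ ≤ indepNumOn G Set.univ := indepNumOn_mono (Set.subset_univ _)

theorem exists_isPathList_forall_mem_or_indepNumOn_add_lt [Finite V] {m : ℕ}
    (hconn : ∀ X : Set V, X.ncard < m → (G.induce Xᶜ).Connected) :
    ∃ l, IsPathList G l ∧
      ((∀ v, v ∈ l) ∨ indepNumOn G {v | v ∉ l} + m < indepNumOn G Set.univ) := by
  by_cases hspan : ∃ l, IsPathList G l ∧ ∀ v, v ∈ l
  · obtain ⟨l, hl, hmem⟩ := hspan
    exact ⟨l, hl, .inl hmem⟩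
  push Not at hspan
  obtain ⟨l, H, h⟩ := exists_isOptimal hspan
  have hm : m ≤ {v | v ∈ l ∧ Attached G H v}.ncard :=
    not_lt.1 fun hlt => h.not_connected (hconn _ hlt)
  exact ⟨l, h.toIsPathList, .inr (by have := h.indepNumOn_compl_add_lt; omega)⟩

end Bound

end WinTheorem

/-- (Win) Let `k ≥ 2` and `m ≥ 1` be integers and let `G` be a finite `m`-connected simple
graph (more than `m` vertices, and removing any fewer than `m` vertices leaves it connected).
If the independence number of `G` is at most `m + k - 1`, then `G` has a spanning tree with
at most `k` leaves. -/
theorem stmt_5 {V : Type*} [Fintype V] [DecidableEq V] (G : SimpleGraph V)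
    (k m : ℕ) (hk : 2 ≤ k) (hm : 1 ≤ m)
    (hcard : m < Fintype.card V)
    (hconn : ∀ S : Finset V, S.card < m → (G.induce ((S : Set V)ᶜ)).Connected)
    (hindep : ∀ s : Finset V,
      ((s : Set V).Pairwise fun u v => ¬ G.Adj u v) → s.card ≤ m + k - 1) :
    ∃ T : SimpleGraph V, T ≤ G ∧ T.IsTree ∧
      {v : V | (T.neighborSet v).ncard = 1}.ncard ≤ k := by
  classical
  have hconn' : ∀ X : Set V, X.ncard < m → (G.induce Xᶜ).Connected := fun X hX =>
    X.coe_toFinset ▸ hconn X.toFinset (by rwa [← Set.ncard_eq_toFinset_card'])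
  have hG : G.Connected :=
    (SimpleGraph.induceUnivIso G).connected_iff.1 (Set.compl_empty ▸ hconn' ∅ (by simpa))
  have hα : WinTheorem.indepNumOn G Set.univ ≤ m + k - 1 := by
    obtain ⟨s, -, hs, hs_card⟩ := WinTheorem.exists_isIndepSet_ncard_eq G Set.univ
    rw [← hs_card, Set.ncard_eq_toFinset_card']
    exact hindep s.toFinset (by simpa using hs)
  obtain ⟨l, hl, hout⟩ := WinTheorem.exists_isPathList_forall_mem_or_indepNumOn_add_lt hconn'
  have hlk : WinTheorem.indepNumOn G {v | v ∉ l} + 2 ≤ k := by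
    rcases hout with hmem | hlt
    · simpa [hmem] using hk
    · omega
  obtain ⟨T, hTG, hT, hleaves⟩ := hl.exists_isTree_ncard_leaves_le hG
  exact ⟨T, hTG, hT, hleaves.trans hlk⟩
end
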